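/- Let d ≥ 5, b > 1, and let C be a clustering, with at least two clusters, of an n-element configuration in Z^d such that: every cluster has at most 3 elements; sep(C)^{0.1} ≥ (log sep(C))^{d−2}; and diam(C^j) ≤ b·log dist(C^j, C^{≠j}) for every j. There is a number c = c(d) > 0 such that for every cluster index i, every x ∈ C^i and every y ∈ ∂(C^i∖{x}) with p_{π(C)}(x,y) > 0, one has P_x(S_{τ−1} = y | τ < ∞) ≥ (1 − c·n·b^{d−2}·sep(C)^{2.1−d})·P_x(S_{τ'−1} = y | τ' < ∞), where τ = τ_{π(C)∖{x}} and τ' = τ_{C^i∖{x}}. -/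

import Mathlib

open MeasureTheory

namespace HATFormal

/-- Points of the lattice `ℤ^d`. -/
abbrev Pt (d : ℕ) := Fin d → ℤ

/-- The `2d` unit steps of the simple random walk on `ℤ^d`. -/
def Dir (d : ℕ) : Set (Pt d) :=
  {s | ∃ i : Fin d, s = Pi.single i 1 ∨ s = Pi.single i (-1)}

/-- The position, after `t` steps, of the walk started at `x` with steps `s`. -/
def wpos (d : ℕ) (x : Pt d) {T : ℕ} (s : Fin T → Pt d) (t : ℕ) : Pt d :=
  x + ∑ i ∈ Finset.univ.filter (fun i : Fin T => (i : ℕ) < t), s i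

/-- The probability of an event `P` of the first `T` steps of simple random walk on `ℤ^d`. -/
noncomputable def prob (d T : ℕ) (P : (Fin T → Pt d) → Prop) : ℝ :=
  (Nat.card {s : Fin T → Pt d // (∀ i, s i ∈ Dir d) ∧ P s} : ℝ) / ((2 * d : ℕ) : ℝ) ^ T

open Classical in
/-- `esc d A x = P_x(τ_A = ∞)` if `x ∈ A`, and `0` otherwise. -/
noncomputable def esc (d : ℕ) (A : Set (Pt d)) (x : Pt d) : ℝ :=
  if x ∈ A then ⨅ T : ℕ, prob d T (fun s => ∀ t, 1 ≤ t → t ≤ T → wpos d x s t ∉ A) else 0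

/-- The capacity of `A`. -/
noncomputable def capa (d : ℕ) (A : Set (Pt d)) : ℝ := ∑' x : A, esc d A (x : Pt d)

/-- The harmonic measure `H_A(x) = esc_A(x) / cap_A`. -/
noncomputable def harm (d : ℕ) (A : Set (Pt d)) (x : Pt d) : ℝ := esc d A x / capa d A

/-- `P_x(τ_W < ∞)`. -/
noncomputable def retProb (d : ℕ) (W : Set (Pt d)) (x : Pt d) : ℝ :=
  ∑' t : ℕ, prob d t (fun s => 1 ≤ t ∧ wpos d x s t ∈ W ∧
    ∀ u, 1 ≤ u → u < t → wpos d x s u ∉ W)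

/-- `P_x(τ_W < ∞ and S_{τ_W − 1} = y)`. -/
noncomputable def hitFrom (d : ℕ) (W : Set (Pt d)) (x y : Pt d) : ℝ :=
  ∑' t : ℕ, prob d t (fun s => 1 ≤ t ∧ wpos d x s t ∈ W ∧ wpos d x s (t - 1) = y ∧
    ∀ u, 1 ≤ u → u < t → wpos d x s u ∉ W)

/-- `P_x(τ_W < ∞ and S_{τ_W} ∈ T)`. -/
noncomputable def firstHitIn (d : ℕ) (W T : Set (Pt d)) (x : Pt d) : ℝ :=
  ∑' t : ℕ, prob d t (fun s => 1 ≤ t ∧ wpos d x s t ∈ W ∧ wpos d x s t ∈ T ∧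
    ∀ u, 1 ≤ u → u < t → wpos d x s u ∉ W)

/-- `P_x(S_{τ_W − 1} = y ∣ τ_W < ∞)`. -/
noncomputable def transP (d : ℕ) (W : Set (Pt d)) (x y : Pt d) : ℝ :=
  hitFrom d W x y / retProb d W x

/-- The Green's function of simple random walk on `ℤ^d`. -/
noncomputable def green (d : ℕ) (x : Pt d) : ℝ :=
  ∑' t : ℕ, prob d t (fun s => wpos d x s t = 0)

/-- Configurations: finite subsets of `ℤ^d`. -/
abbrev Conf (d : ℕ) := Finset (Pt d)

/-- `p_U(x, y)`, the probability that HAT activates at `x` and transports to `y`. -/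
noncomputable def pHAT (d : ℕ) (U : Conf d) (x y : Pt d) : ℝ :=
  harm d (↑U) x * transP d ((↑U : Set (Pt d)) \ {x}) x y

open Classical in
/-- The transition probabilities of HAT. -/
noncomputable def hatProb (d : ℕ) (U V : Conf d) : ℝ :=
  if V = U then ∑' z : Pt d, pHAT d U z z
  else ∑' x : Pt d, ∑' y : Pt d,
    if x ∈ U ∧ x ≠ y ∧ V = insert y (U.erase x) then pHAT d U x y else 0

instance (d : ℕ) : MeasurableSpace (Conf d) := ⊤

/-- `μ` is the law of HAT started from `U`. -/
def IsHATLaw (d : ℕ) (U : Conf d) (μ : Measure (ℕ → Conf d)) : Prop :=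
  IsProbabilityMeasure μ ∧
  ∀ (t : ℕ) (u : ℕ → Conf d),
    μ {ω | ∀ s ≤ t, ω s = u s} =
      (if u 0 = U then 1 else 0) *
        ∏ s ∈ Finset.range t, ENNReal.ofReal (hatProb d (u s) (u (s + 1)))

/-- A signed permutation plus translation of `ℤ^d`. -/
def SymImage (d : ℕ) (σ : Equiv.Perm (Fin d)) (ε : Fin d → ℤ) (v : Pt d) (x : Pt d) : Pt d :=
  fun i => v i + ε i * x (σ i)

/-- `SymEq d U V` holds when `V = gU` for a symmetry `g` of `ℤ^d`. -/
def SymEq (d : ℕ) (U V : Conf d) : Prop :=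
  ∃ (σ : Equiv.Perm (Fin d)) (ε : Fin d → ℤ) (v : Pt d),
    (∀ i, ε i = 1 ∨ ε i = -1) ∧ V = U.image (SymImage d σ ε v)

/-- Euclidean distance on `ℤ^d`. -/
noncomputable def dist0 (d : ℕ) (x y : Pt d) : ℝ :=
  Real.sqrt (∑ i, ((x i : ℝ) - (y i : ℝ)) ^ 2)

/-- Euclidean distance between finite subsets of `ℤ^d`. -/
noncomputable def setDist (d : ℕ) (A B : Finset (Pt d)) : ℝ :=
  sInf {r : ℝ | ∃ x ∈ A, ∃ y ∈ B, r = dist0 d x y}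

/-- Euclidean diameter of a finite subset of `ℤ^d`. -/
noncomputable def diam0 (d : ℕ) (A : Finset (Pt d)) : ℝ :=
  sSup {r : ℝ | ∃ x ∈ A, ∃ y ∈ A, r = dist0 d x y}

/-- Lattice (nearest-neighbor) adjacency in `ℤ^d`. -/
def latAdj (d : ℕ) (x y : Pt d) : Prop := (∑ i, (x i - y i).natAbs) = 1

/-- Exterior lattice boundary of a set. -/
def bdry (d : ℕ) (A : Set (Pt d)) : Set (Pt d) := {z | z ∉ A ∧ ∃ w ∈ A, latAdj d z w}

/-- Non-isolated configurations: some exposed element has a lattice neighbor in the set. -/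
def NonIso (d : ℕ) (U : Conf d) : Prop :=
  ∃ x ∈ U, 0 < esc d (↑U) x ∧ ∃ y ∈ U, latAdj d x y

/-- `C` is a clustering (ordered partition into nonempty clusters) of `U`. -/
def IsClusteringOf (d : ℕ) {k : ℕ} (C : Fin k → Finset (Pt d)) (U : Finset (Pt d)) : Prop :=
  (∀ i, (C i).Nonempty) ∧ (∀ i j, i ≠ j → Disjoint (C i) (C j)) ∧
    Finset.univ.biUnion C = U

/-- `C^{≠ i}`, the union of the clusters other than `i`. -/
def others (d : ℕ) {k : ℕ} (C : Fin k → Finset (Pt d)) (i : Fin k) : Finset (Pt d) :=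
  Finset.univ.biUnion fun j => if j = i then ∅ else C j

/-- The separation of a clustering. -/
noncomputable def sep (d : ℕ) {k : ℕ} (C : Fin k → Finset (Pt d)) : ℝ :=
  ⨅ i, setDist d (C i) (others d C i)

/-- `(a, b)` separated dimer-or-trimer (DOT) clusterings. -/
def IsDOT (d : ℕ) {k : ℕ} (C : Fin k → Finset (Pt d)) (a b : ℝ) : Prop :=
  (∀ i, (C i).card = 2 ∨ (C i).card = 3) ∧ a ≤ sep d C ∧
    ∀ i, diam0 d (C i) ≤ b * Real.log (setDist d (C i) (others d C i))

/-- Clusterings with an unspecified number of clusters. -/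
abbrev ClusteringS (d : ℕ) := Σ k : ℕ, Fin k → Finset (Pt d)

/-- `π(C)`, the union of the clusters of `C`. -/
def confOf (d : ℕ) (C : ClusteringS d) : Conf d := Finset.univ.biUnion C.2

/-- `C ∈ 𝒞(U, a, b)`. -/
def InC (d : ℕ) (U : Conf d) (a b : ℝ) (C : ClusteringS d) : Prop :=
  IsClusteringOf d C.2 U ∧ IsDOT d C.2 a b

/-- `U ∈ 𝒰_{d,n}(a, b)`. -/
def InU (d n : ℕ) (a b : ℝ) (U : Conf d) : Prop :=
  U.card = n ∧ ∃ C : ClusteringS d, InC d U a b C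

/-- `C` is a clustering of an `n`-element configuration. -/
def IsClusteringConf (d n : ℕ) (C : ClusteringS d) : Prop :=
  (∀ i, (C.2 i).Nonempty) ∧ (∀ i j, i ≠ j → Disjoint (C.2 i) (C.2 j)) ∧
    (confOf d C).card = n

open Classical in
/-- One step of the natural clustering. -/
noncomputable def clustStep (d : ℕ) (Ut Ut1 : Conf d) (C : ClusteringS d) : ClusteringS d :=
  if Ut1 = Ut then C
  else if h : ∃ p : Pt d × Pt d × Fin C.1,
      Ut \ Ut1 = {p.1} ∧ Ut1 \ Ut = {p.2.1} ∧ p.1 ∈ C.2 p.2.2 then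
    ⟨C.1, Function.update C.2 h.choose.2.2
      (insert h.choose.2.1 ((C.2 h.choose.2.2).erase h.choose.1))⟩
  else ⟨1, fun _ => Ut1⟩

/-- The natural clustering of the trajectory `ω` with initial clustering `C0`. -/
noncomputable def natClust (d : ℕ) (ω : ℕ → Conf d) (C0 : ClusteringS d) : ℕ → ClusteringS d
  | 0 => C0
  | t + 1 => clustStep d (ω t) (ω (t + 1)) (natClust d ω C0 t)

/-- `a_s = s^{1/2 − n^{−100}} + 100 n`. -/
noncomputable def aSep (n s : ℕ) : ℝ :=
  (s : ℝ) ^ ((1 : ℝ) / 2 - (n : ℝ) ^ (-(100 : ℝ))) + 100 * n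

/-- `C^{i, x, y}`: remove `x` from cluster `i` of `C` and add `y` to that cluster. -/
def updC (d : ℕ) (C : ClusteringS d) (i : Fin C.1) (x y : Pt d) : ClusteringS d :=
  ⟨C.1, Function.update C.2 i (insert y ((C.2 i).erase x))⟩

open Classical in
/-- The transition probabilities of the lifting of HAT to clusterings. -/
noncomputable def liftProb (d : ℕ) (E0 E1 : ClusteringS d) : ℝ :=
  ∑' x : Pt d, ∑' y : Pt d,
    if ∃ i : Fin E0.1, x ∈ E0.2 i ∧ E1 = updC d E0 i x y
    then pHAT d (confOf d E0) x y else 0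

/-- The capacity of a clustering: the sum of the capacities of its clusters. -/
noncomputable def capS (d : ℕ) (C : ClusteringS d) : ℝ := ∑ i, capa d (↑(C.2 i))

/-- `H_C(i, x) = esc_{C^i}(x) / cap_C`. -/
noncomputable def harmS (d : ℕ) (C : ClusteringS d) (i : Fin C.1) (x : Pt d) : ℝ :=
  esc d (↑(C.2 i)) x / capS d C

/-- `q_C(i, x, y)`. -/
noncomputable def qIHAT (d : ℕ) (C : ClusteringS d) (i : Fin C.1) (x y : Pt d) : ℝ :=
  harmS d C i x * transP d ((↑(C.2 i) : Set (Pt d)) \ {x}) x y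

open Classical in
/-- The transition probabilities of intracluster HAT (IHAT). -/
noncomputable def ihatProb (d : ℕ) (D E : ClusteringS d) : ℝ :=
  ∑' x : Pt d, ∑' y : Pt d, ∑ i : Fin D.1,
    if x ∈ D.2 i ∧ E = updC d D i x y then qIHAT d D i x y else 0

instance (d : ℕ) : MeasurableSpace (ClusteringS d) := ⊤

open Classical in
/-- `μ` is the law of the lifted HAT chain started from `E0`. -/
def IsLiftLaw (d : ℕ) (E0 : ClusteringS d) (μ : Measure (ℕ → ClusteringS d)) : Prop :=
  IsProbabilityMeasure μ ∧
  ∀ (t : ℕ) (u : ℕ → ClusteringS d),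
    μ {ω | ∀ s ≤ t, ω s = u s} =
      (if u 0 = E0 then 1 else 0) *
        ∏ s ∈ Finset.range t, ENNReal.ofReal (liftProb d (u s) (u (s + 1)))

open Classical in
/-- `μ` is the law of intracluster HAT started from `D0`. -/
def IsIHATLaw (d : ℕ) (D0 : ClusteringS d) (μ : Measure (ℕ → ClusteringS d)) : Prop :=
  IsProbabilityMeasure μ ∧
  ∀ (t : ℕ) (u : ℕ → ClusteringS d),
    μ {ω | ∀ s ≤ t, ω s = u s} =
      (if u 0 = D0 then 1 else 0) *
        ∏ s ∈ Finset.range t, ENNReal.ofReal (ihatProb d (u s) (u (s + 1)))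

/-- `Pairs(E0, E1)`. -/
def Pairs (d : ℕ) (E0 E1 : ClusteringS d) : Set (Pt d × Pt d) :=
  {p | 0 < pHAT d (confOf d E0) p.1 p.2 ∧
    ∃ i : Fin E0.1, p.1 ∈ E0.2 i ∧ E1 = updC d E0 i p.1 p.2}

/-- `Triples(E0, E1)`. -/
def Triples (d : ℕ) (E0 E1 : ClusteringS d) : Set (Fin E0.1 × Pt d × Pt d) :=
  {q | 0 < qIHAT d E0 q.1 q.2.1 q.2.2 ∧ E1 = updC d E0 q.1 q.2.1 q.2.2}

/-- The first standard basis vector of `ℤ^d`. -/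
def e1v (d : ℕ) : Pt d := fun i => if (i : ℕ) = 0 then 1 else 0

/-- Reference dimers and trimers. -/
def Ref (d : ℕ) : Set (Finset (Pt d)) :=
  {A | ∃ x : Pt d, A = {x, x + e1v d} ∨ A = {x, x + e1v d, x + e1v d + e1v d}}

/-- *-adjacency in `ℤ^d`: distinct points differing by at most one in each coordinate. -/
def starAdj (d : ℕ) (x y : Pt d) : Prop := x ≠ y ∧ ∀ i, (x i - y i).natAbs ≤ 1

/-- The *-visible boundary of `A`. -/
def visBdry (d : ℕ) (A : Finset (Pt d)) : Set (Pt d) :=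
  {x | (∃ y ∈ A, starAdj d x y) ∧
    ∃ γ : ℕ → Pt d, γ 0 = x ∧ (∀ t, latAdj d (γ t) (γ (t + 1))) ∧
      (∀ t, γ t ∉ A) ∧ ∀ r : ℝ, ∃ t, r < dist0 d (γ t) 0}

/-- `A` is connected in the nearest-neighbor graph of `ℤ^d`. -/
def LatConnected (d : ℕ) (A : Finset (Pt d)) : Prop :=
  ∀ x ∈ A, ∀ y ∈ A, ∃ (L : ℕ) (γ : ℕ → Pt d), γ 0 = x ∧ γ L = y ∧
    (∀ t < L, latAdj d (γ t) (γ (t + 1))) ∧ ∀ t ≤ L, γ t ∈ A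

/-- Strict lexicographic order on `ℤ^d`. -/
def lexLt (d : ℕ) (x y : Pt d) : Prop :=
  ∃ i : Fin d, (∀ j, j < i → x j = y j) ∧ x i < y i

/-- `x` is the lex (least) element of `A`. -/
def IsLex (d : ℕ) (A : Finset (Pt d)) (x : Pt d) : Prop :=
  x ∈ A ∧ ∀ y ∈ A, y ≠ x → lexLt d x y

/-!
Let `A` be the cluster without `x` and `O` the union of the other clusters. Summing over the time
of the last visit to `y` before absorption, `P_x(S_{τ-1} = y, τ < ∞)` is the probability of
stepping from `y` into the absorbing set times its killed Green function at `(x, y)`. Absorbing on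
`A ∪ O` instead of `A` only increases the first factor, and by the strong Markov property it
changes the Green function, as well as the return probability `P_x(τ < ∞)`, by at most a constant
times the probability of ever visiting `O`. So it is enough that the latter is small compared with
the Green function killed on `A`.

For `β < (d - 2) / 2` and large `a` the function `(|v|² + a)^(-β)` is superharmonic, and for
`β > (d - 2) / 2` it is subharmonic, by a second-order Taylor expansion. As comparison functions
these give, for every `ε > 0`, a bound of order `|O| ρ^(-(d - 2 - ε))` on the probability of
visiting `O`, where `ρ` is the distance from the cluster to the others, and a bound of order
`D^(-(d - 2 + ε))` from below on the Green function at distance `D`, the diameter of the cluster.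
The latter survives killing on fewer than `d` points: a lattice direction along which the walk can
run away from them without meeting them always exists. Finally `D ≤ b log ρ` makes the loss of
`D^ε` and `ρ^ε` negligible against `ρ^δ`, for any fixed `δ > 0`.
-/

/-! ### From path counting to the averaging operator -/

variable {d : ℕ}

/-- The `2d` unit steps of the walk, as a finite set. -/
def steps (d : ℕ) : Finset (Pt d) :=
  Finset.univ.image fun p : Fin d × ℤˣ => Pi.single p.1 (p.2 : ℤ)

lemma mem_steps {e : Pt d} : e ∈ steps d ↔ e ∈ Dir d := by
  simp only [steps, Finset.mem_image, Finset.mem_univ, true_and, Prod.exists, Dir,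
    Set.mem_ofPred_eq]
  refine exists_congr fun i => ⟨?_, ?_⟩
  · rintro ⟨ε, rfl⟩
    rcases Int.units_eq_one_or ε with rfl | rfl <;> simp
  · rintro (rfl | rfl)
    exacts [⟨1, by simp⟩, ⟨-1, by simp⟩]

lemma sum_steps (F : Pt d → ℝ) :
    ∑ e ∈ steps d, F e = ∑ i, (F (Pi.single i 1) + F (Pi.single i (-1))) := by
  have hinj : Function.Injective fun p : Fin d × ℤˣ => (Pi.single p.1 (p.2 : ℤ) : Pt d) := by
    rintro ⟨i, ε⟩ ⟨j, ε'⟩ h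
    have hij : i = j := by
      by_contra hne
      simpa [hne] using congrFun h i
    subst hij
    simpa [Units.ext_iff] using h
  rw [steps, Finset.sum_image hinj.injOn, Fintype.sum_prod_type]
  refine Finset.sum_congr rfl fun i _ => ?_
  rw [UnitsInt.univ, Finset.sum_pair (by decide)]
  simp

lemma card_steps (d : ℕ) : ((steps d).card : ℝ) = 2 * d := by
  rw [← nsmul_one, ← Finset.sum_const, sum_steps]
  simp [mul_comm, one_add_one_eq_two]

lemma neg_mem_steps {e : Pt d} (he : e ∈ steps d) : -e ∈ steps d := by
  obtain ⟨i, rfl | rfl⟩ := mem_steps.1 he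
  · exact mem_steps.2 ⟨i, .inr (Pi.single_neg _ _).symm⟩
  · exact mem_steps.2 ⟨i, .inl (by rw [← Pi.single_neg, neg_neg])⟩

lemma finite_dir (d : ℕ) : (Dir d).Finite :=
  (steps d).finite_toSet.subset fun _ he => mem_steps.2 he

instance finite_paths (T : ℕ) (P : (Fin T → Pt d) → Prop) :
    Finite {s : Fin T → Pt d // (∀ i, s i ∈ Dir d) ∧ P s} :=
  (Set.Finite.pi' fun _ => finite_dir d).subset fun _ hs => hs.1

/-- A path of `T + 1` steps is its first step followed by a path of `T` steps. -/
def firstStepEquiv (T : ℕ) (P : (Fin (T + 1) → Pt d) → Prop) :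
    {s : Fin (T + 1) → Pt d // (∀ i, s i ∈ Dir d) ∧ P s} ≃
      Σ e : steps d, {s : Fin T → Pt d // (∀ i, s i ∈ Dir d) ∧ P (Fin.cons e.1 s)} where
  toFun s := ⟨⟨s.1 0, mem_steps.2 (s.2.1 0)⟩, Fin.tail s.1, fun i => s.2.1 i.succ,
    by simpa only [Fin.cons_self_tail] using s.2.2⟩
  invFun p := ⟨Fin.cons p.1.1 p.2.1,
    Fin.cases (mem_steps.1 p.1.2) fun j => by simpa only [Fin.cons_succ] using p.2.2.1 j, p.2.2.2⟩
  left_inv s := Subtype.ext (Fin.cons_self_tail s.1)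
  right_inv _ := rfl

lemma prob_zero (P : (Fin 0 → Pt d) → Prop) [Decidable (P 0)] :
    prob d 0 P = if P 0 then 1 else 0 := by
  have huniq (s : Fin 0 → Pt d) : s = 0 := Subsingleton.elim _ _
  unfold prob
  split_ifs with h
  · have : Unique {s : Fin 0 → Pt d // (∀ i, s i ∈ Dir d) ∧ P s} :=
      ⟨⟨⟨0, fun i => i.elim0, h⟩⟩, fun s => Subtype.ext (huniq s.1)⟩
    rw [Nat.card_unique]
    simp
  · have : IsEmpty {s : Fin 0 → Pt d // (∀ i, s i ∈ Dir d) ∧ P s} :=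
      ⟨fun s => h (huniq s.1 ▸ s.2.2)⟩
    rw [Nat.card_of_isEmpty]
    simp

lemma prob_false (T : ℕ) : prob d T (fun _ => False) = 0 := by simp [prob]

lemma prob_const_and (T : ℕ) (p : Prop) [Decidable p] (P : (Fin T → Pt d) → Prop) :
    prob d T (fun s => p ∧ P s) = if p then prob d T P else 0 := by
  split_ifs with hp <;> simp [hp, prob_false]

/-- The averaging operator `f ↦ (x ↦ E_x f(S₁))` of simple random walk. -/
noncomputable def avg (d : ℕ) : (Pt d → ℝ) →ₗ[ℝ] (Pt d → ℝ) :=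
  (2 * d : ℝ)⁻¹ • ∑ e ∈ steps d, LinearMap.funLeft ℝ ℝ (· + e)

lemma avg_apply (f : Pt d → ℝ) (x : Pt d) :
    avg d f x = (∑ e ∈ steps d, f (x + e)) / (2 * d) := by
  simp [avg, LinearMap.funLeft_apply, div_eq_inv_mul]

lemma prob_succ (T : ℕ) (P : (Fin (T + 1) → Pt d) → Prop) :
    prob d (T + 1) P = (∑ e ∈ steps d, prob d T fun s => P (Fin.cons e s)) / (2 * d) := by
  have hcard := Finset.sum_coe_sort (steps d) fun e =>
    (Nat.card {s : Fin T → Pt d // (∀ i, s i ∈ Dir d) ∧ P (Fin.cons e s)} : ℝ)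
  simp only [prob]
  rw [Nat.card_congr (firstStepEquiv T P), Nat.card_sigma, ← Finset.sum_div, ← hcard, pow_succ]
  push_cast
  rw [div_div]

lemma wpos_zero (x : Pt d) {T : ℕ} (s : Fin T → Pt d) : wpos d x s 0 = x := by
  simp [wpos]

lemma wpos_cons (x e : Pt d) {T : ℕ} (s : Fin T → Pt d) (t : ℕ) :
    wpos d x (Fin.cons e s : Fin (T + 1) → Pt d) (t + 1) = wpos d (x + e) s t := by
  unfold wpos
  rw [Finset.sum_filter, Finset.sum_filter, Fin.sum_univ_succ]
  simp [add_assoc]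

lemma forall_wpos_cons_notMem_iff (W : Set (Pt d)) (x e : Pt d) {T : ℕ} (s : Fin T → Pt d)
    (t : ℕ) :
    (∀ u, 1 ≤ u → u < t + 2 → wpos d x (Fin.cons e s : Fin (T + 1) → Pt d) u ∉ W) ↔
      x + e ∉ W ∧ ∀ u, 1 ≤ u → u < t + 1 → wpos d (x + e) s u ∉ W := by
  constructor
  · intro h
    refine ⟨by simpa [wpos_cons, wpos_zero] using h 1 le_rfl (by lia), fun u _ hu => ?_⟩
    simpa [wpos_cons] using h (u + 1) (by lia) (by lia)
  · rintro ⟨h₁, h⟩ (_ | _ | u) hu hut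
    · lia
    · simpa [wpos_cons, wpos_zero] using h₁
    · simpa [wpos_cons] using h (u + 1) (by lia) (by lia)

/-- The one-step probability of entering `W`. -/
noncomputable def entryProb (d : ℕ) (W : Set (Pt d)) : Pt d → ℝ :=
  avg d (W.indicator 1)

/-- The averaging operator of the walk killed on entering `W`. -/
noncomputable def killedAvg (d : ℕ) (W : Set (Pt d)) : (Pt d → ℝ) →ₗ[ℝ] (Pt d → ℝ) :=
  avg d ∘ₗ LinearMap.mulLeft ℝ (Wᶜ.indicator 1)

lemma killedAvg_eq (W : Set (Pt d)) (f : Pt d → ℝ) :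
    killedAvg d W f = avg d (Wᶜ.indicator f) := by
  classical
  refine congrArg (avg d) (funext fun x => ?_)
  simp [Set.indicator_apply]

/-- The probability that the walk from `x` first enters `W` at time `t`, from a point of `R`. -/
noncomputable def firstEntryProb (d : ℕ) (W R : Set (Pt d)) (t : ℕ) (x : Pt d) : ℝ :=
  prob d t fun s => 1 ≤ t ∧ wpos d x s t ∈ W ∧ wpos d x s (t - 1) ∈ R ∧
    ∀ u, 1 ≤ u → u < t → wpos d x s u ∉ W

lemma firstEntryProb_zero (W R : Set (Pt d)) (x : Pt d) : firstEntryProb d W R 0 x = 0 := by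
  simp [firstEntryProb, prob_false]

lemma firstEntryProb_one (W R : Set (Pt d)) :
    firstEntryProb d W R 1 = R.indicator (entryProb d W) := by
  classical
  funext x
  have hvoid (p : ℕ → Prop) : (∀ u, 1 ≤ u → u < 1 → p u) ↔ True := by grind
  have hstep (e : Pt d) (s : Fin 0 → Pt d) :
      wpos d x (Fin.cons e s : Fin 1 → Pt d) 1 = x + e := by
    rw [wpos_cons x e s 0, wpos_zero]
  unfold firstEntryProb
  rw [prob_succ]
  simp only [hvoid, hstep, Nat.sub_self, wpos_zero, le_refl, true_and, and_true,
    prob_zero]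
  by_cases hx : x ∈ R <;> simp [hx, entryProb, avg_apply, Set.indicator_apply]

lemma firstEntryProb_add_two (W R : Set (Pt d)) (t : ℕ) :
    firstEntryProb d W R (t + 2) = killedAvg d W (firstEntryProb d W R (t + 1)) := by
  classical
  funext x
  rw [killedAvg_eq, avg_apply]
  conv_lhs => unfold firstEntryProb
  rw [prob_succ]
  congr 1
  refine Finset.sum_congr rfl fun e _ => ?_
  rw [Set.indicator_apply, firstEntryProb, ← prob_const_and]
  congr 1
  funext s
  simp only [forall_wpos_cons_notMem_iff, wpos_cons x e s (t + 1), Nat.add_sub_cancel,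
    show t + 2 - 1 = t + 1 from rfl, wpos_cons x e s t, Set.mem_compl_iff, Nat.le_add_left,
    true_and, show (1 ≤ t + 2) = True by simp]
  grind

lemma firstEntryProb_add_one (W R : Set (Pt d)) (t : ℕ) :
    firstEntryProb d W R (t + 1) = (killedAvg d W ^ t) (R.indicator (entryProb d W)) := by
  induction t with
  | zero => exact firstEntryProb_one W R
  | succ t ih => rw [firstEntryProb_add_two, ih, pow_succ', Module.End.mul_apply]

/-- The potential `∑ₜ Eₓ[g(Sₜ); t < τ_W]` of the source `g` for the walk killed on entering `W`;
it is `0` where the series diverges. -/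
noncomputable def potential (d : ℕ) (W : Set (Pt d)) (g : Pt d → ℝ) (x : Pt d) : ℝ :=
  ∑' t : ℕ, (killedAvg d W ^ t) g x

lemma tsum_firstEntryProb (W R : Set (Pt d)) (x : Pt d) :
    ∑' t, firstEntryProb d W R t x = potential d W (R.indicator (entryProb d W)) x := by
  have hsupp : Function.support (firstEntryProb d W R · x) ⊆ Set.range Nat.succ := by
    rintro (_ | t) ht
    exacts [absurd (firstEntryProb_zero W R x) ht, ⟨t, rfl⟩]
  rw [← Nat.succ_injective.tsum_eq hsupp]
  simp only [Nat.succ_eq_add_one, firstEntryProb_add_one, potential]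

lemma retProb_eq_potential (W : Set (Pt d)) (x : Pt d) :
    retProb d W x = potential d W (entryProb d W) x := by
  simpa [firstEntryProb, retProb] using tsum_firstEntryProb W Set.univ x

lemma hitFrom_eq_potential (W : Set (Pt d)) (x y : Pt d) :
    hitFrom d W x y = potential d W (Pi.single y (entryProb d W y)) x := by
  classical
  have hsingle : ({y} : Set (Pt d)).indicator (entryProb d W) = Pi.single y (entryProb d W y) :=
    Set.indicator_singleton y _
  rw [← hsingle, ← tsum_firstEntryProb]
  rfl

/-! ### Potential theory of the killed walk -/

lemma avg_mono : Monotone (avg d) := fun f g h x => by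
  simp only [avg_apply]
  gcongr
  exact h _

lemma avg_const (hd : 0 < d) (c : ℝ) : avg d (fun _ => c) = fun _ => c := by
  funext x
  have hd' : (d : ℝ) ≠ 0 := by positivity
  rw [avg_apply, Finset.sum_const, nsmul_eq_mul, card_steps]
  field_simp

lemma avg_one_le : avg d 1 ≤ 1 := by
  rcases Nat.eq_zero_or_pos d with rfl | hd
  · intro x
    simp [avg_apply]
  · exact (avg_const hd 1).le

lemma avg_translate (f : Pt d → ℝ) (y x : Pt d) :
    avg d (fun v => f (v - y)) x = avg d f (x - y) := by
  simp only [avg_apply, add_sub_right_comm]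

lemma div_le_avg {f : Pt d → ℝ} (hf : 0 ≤ f) {e : Pt d} (he : e ∈ steps d) (x : Pt d) :
    f (x + e) / (2 * d) ≤ avg d f x := by
  rw [avg_apply]
  gcongr
  exact Finset.single_le_sum (f := fun e => f (x + e)) (fun _ _ => hf _) he

lemma killedAvg_empty : killedAvg d ∅ = avg d :=
  LinearMap.ext fun f => by simp [killedAvg_eq]

lemma killedAvg_mono (W : Set (Pt d)) : Monotone (killedAvg d W) := fun f g h => by
  simp only [killedAvg_eq]
  exact avg_mono fun _ => Set.indicator_le_indicator (h _)

lemma killedAvg_nonneg (W : Set (Pt d)) {f : Pt d → ℝ} (hf : 0 ≤ f) : 0 ≤ killedAvg d W f := by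
  simpa using killedAvg_mono W hf

lemma killedAvg_anti {A W : Set (Pt d)} (hAW : A ⊆ W) {f : Pt d → ℝ} (hf : 0 ≤ f) :
    killedAvg d W f ≤ killedAvg d A f := by
  simp only [killedAvg_eq]
  exact avg_mono (Set.indicator_le_indicator_of_subset (Set.compl_subset_compl.2 hAW) hf)

lemma continuous_killedAvg (W : Set (Pt d)) : Continuous (killedAvg d W) := by
  classical
  refine continuous_pi fun x => ?_
  simp only [killedAvg_eq, avg_apply]
  refine (continuous_finsetSum _ fun e _ => ?_).div_const _
  by_cases he : x + e ∈ W <;> simp [he, continuous_const, continuous_apply]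

lemma killedAvg_pow_nonneg (W : Set (Pt d)) {g : Pt d → ℝ} (hg : 0 ≤ g) (t : ℕ) :
    0 ≤ (killedAvg d W ^ t) g := by
  induction t with
  | zero => simpa using hg
  | succ t ih =>
    rw [pow_succ', Module.End.mul_apply]
    exact killedAvg_nonneg W ih

lemma entryProb_nonneg (W : Set (Pt d)) : 0 ≤ entryProb d W := by
  rw [entryProb, ← map_zero (avg d)]
  exact avg_mono fun _ => Set.indicator_nonneg (fun _ _ => zero_le_one) _

lemma entryProb_mono {A W : Set (Pt d)} (hAW : A ⊆ W) : entryProb d A ≤ entryProb d W :=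
  avg_mono (Set.indicator_le_indicator_of_subset hAW zero_le_one)

/-- The potential of `g` restricted to the first `T` times. -/
noncomputable def partialPotential (d : ℕ) (W : Set (Pt d)) (g : Pt d → ℝ) (T : ℕ) : Pt d → ℝ :=
  ∑ t ∈ Finset.range T, (killedAvg d W ^ t) g

lemma partialPotential_zero (W : Set (Pt d)) (g : Pt d → ℝ) : partialPotential d W g 0 = 0 := by
  simp [partialPotential]

lemma partialPotential_succ (W : Set (Pt d)) (g : Pt d → ℝ) (T : ℕ) :
    partialPotential d W g (T + 1) = g + killedAvg d W (partialPotential d W g T) := by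
  simp only [partialPotential, Finset.sum_range_succ', map_sum, pow_succ', Module.End.mul_apply,
    pow_zero, Module.End.one_apply, add_comm]

lemma potential_nonneg (W : Set (Pt d)) {g : Pt d → ℝ} (hg : 0 ≤ g) : 0 ≤ potential d W g :=
  fun x => tsum_nonneg fun t => killedAvg_pow_nonneg W hg t x

/-- `φ ≥ 0` is a supersolution of `φ = g + Q φ`, where `Q` is the averaging operator of the walk
killed on entering `W` and `g ≥ 0`; its existence makes the potential of `g` converge. -/
structure IsSupersolution (W : Set (Pt d)) (g φ : Pt d → ℝ) : Prop where
  source_nonneg : 0 ≤ g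
  nonneg : 0 ≤ φ
  le : g + killedAvg d W φ ≤ φ

namespace IsSupersolution

variable {A W O : Set (Pt d)} {g g' φ : Pt d → ℝ}

lemma partialPotential_le (h : IsSupersolution W g φ) (T : ℕ) :
    partialPotential d W g T ≤ φ := by
  induction T with
  | zero => simpa [partialPotential_zero] using h.nonneg
  | succ T ih =>
    rw [partialPotential_succ]
    exact (add_le_add_right (killedAvg_mono W ih) g).trans h.le

lemma hasSum (h : IsSupersolution W g φ) :
    HasSum (fun t => (killedAvg d W ^ t) g) (potential d W g) :=
  Pi.hasSum.2 fun x => (summable_of_sum_range_le (c := φ x)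
    (fun t => killedAvg_pow_nonneg W h.source_nonneg t x) fun T => by
      simpa [partialPotential] using h.partialPotential_le T x).hasSum

lemma tendsto_partialPotential (h : IsSupersolution W g φ) (x : Pt d) :
    Filter.Tendsto (partialPotential d W g · x) Filter.atTop (nhds (potential d W g x)) :=
  tendsto_pi_nhds.1 h.hasSum.tendsto_sum_nat x

lemma partialPotential_le_potential (h : IsSupersolution W g φ) (T : ℕ) :
    partialPotential d W g T ≤ potential d W g := fun x => by
  have := (Pi.hasSum.1 h.hasSum x).summable.sum_le_tsum (Finset.range T)
    fun t _ => killedAvg_pow_nonneg W h.source_nonneg t x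
  simpa [partialPotential, potential] using this

lemma potential_le (h : IsSupersolution W g φ) : potential d W g ≤ φ := fun x =>
  le_of_tendsto' (h.tendsto_partialPotential x) fun T => h.partialPotential_le T x

lemma potential_eq (h : IsSupersolution W g φ) :
    potential d W g = g + killedAvg d W (potential d W g) := by
  have hshift :
      HasSum (fun t => (killedAvg d W ^ (t + 1)) g) (killedAvg d W (potential d W g)) := by
    simpa [Function.comp_def, pow_succ'] using h.hasSum.map _ (continuous_killedAvg W)
  simpa using (hshift.zero_add (f := fun t => (killedAvg d W ^ t) g)).unique h.hasSum |>.symm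

lemma anti (h : IsSupersolution A g φ) (hAW : A ⊆ W) : IsSupersolution W g φ :=
  ⟨h.source_nonneg, h.nonneg, (add_le_add_right (killedAvg_anti hAW h.nonneg) g).trans h.le⟩

lemma mono_source (h : IsSupersolution W g φ) (hg' : 0 ≤ g') (hgg' : g' ≤ g) :
    IsSupersolution W g' φ :=
  ⟨hg', h.nonneg, (add_le_add_left hgg' _).trans h.le⟩

lemma potential_isSupersolution (h : IsSupersolution W g φ) :
    IsSupersolution W g (potential d W g) :=
  ⟨h.source_nonneg, potential_nonneg W h.source_nonneg, h.potential_eq.ge⟩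

lemma potential_mono_source (h : IsSupersolution W g φ) (hg' : 0 ≤ g')
    (hgg' : g' ≤ g) : potential d W g' ≤ potential d W g :=
  (h.potential_isSupersolution.mono_source hg' hgg').potential_le

lemma div_le_potential (h : IsSupersolution W g φ) {x e : Pt d} (he : e ∈ steps d)
    (hW : x + e ∉ W) : potential d W g (x + e) / (2 * d) ≤ potential d W g x := by
  have hnonneg : 0 ≤ Wᶜ.indicator (potential d W g) :=
    fun _ => Set.indicator_nonneg (fun x _ => potential_nonneg W h.source_nonneg x) _
  have hstep := div_le_avg hnonneg he x
  rw [Set.indicator_of_mem hW, ← killedAvg_eq] at hstep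
  refine (le_add_of_nonneg_of_le (h.source_nonneg x) hstep).trans ?_
  exact h.potential_isSupersolution.le x

lemma div_pow_le_potential (h : IsSupersolution W g φ) {x e : Pt d} (he : e ∈ steps d) {T : ℕ}
    (hW : ∀ t ≤ T, x + t • e ∉ W) :
    potential d W g (x + T • e) / (2 * d) ^ T ≤ potential d W g x := by
  induction T with
  | zero => simp
  | succ T ih =>
    refine le_trans ?_ (ih fun t ht => hW t (ht.trans T.le_succ))
    rw [pow_succ', ← div_div]
    gcongr
    have hlast := hW (T + 1) le_rfl
    rw [succ_nsmul, ← add_assoc] at hlast ⊢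
    exact h.div_le_potential he hlast

end IsSupersolution

/-- `h` is superharmonic, nonnegative, and at least `1` on `O`. Such a function dominates the
probability of ever visiting `O`. -/
structure IsBarrier (O : Set (Pt d)) (h : Pt d → ℝ) : Prop where
  nonneg : 0 ≤ h
  one_le : ∀ v ∈ O, 1 ≤ h v
  avg_le : avg d h ≤ h

lemma IsSupersolution.potential_le_union_add {A O : Set (Pt d)} {g φ h : Pt d → ℝ} {M : ℝ}
    (hφ : IsSupersolution A g φ) (hh : IsBarrier O h) (hM : 0 ≤ M)
    (hO : ∀ v ∈ O, potential d A g v ≤ M) :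
    potential d A g ≤ potential d (A ∪ O) g + M • h := by
  have hMh : 0 ≤ M • h := smul_nonneg hM hh.nonneg
  have hW := hφ.anti (W := A ∪ O) Set.subset_union_left
  have hpart (T : ℕ) : partialPotential d A g T ≤ potential d (A ∪ O) g + M • h := by
    induction T with
    | zero =>
      rw [partialPotential_zero]
      exact add_nonneg (potential_nonneg _ hφ.source_nonneg) hMh
    | succ T ih =>
      have hind : Aᶜ.indicator (partialPotential d A g T) ≤
          (A ∪ O)ᶜ.indicator (potential d (A ∪ O) g) + M • h := by
        intro v
        have hv := hMh v
        by_cases hvA : v ∈ A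
        · simpa [hvA] using hv
        by_cases hvO : v ∈ O
        · have hMv : M ≤ M * h v := le_mul_of_one_le_right hM (hh.one_le v hvO)
          simpa [hvA, hvO] using
            ((hφ.partialPotential_le_potential T v).trans (hO v hvO)).trans hMv
        · simpa [hvA, hvO] using ih v
      rw [partialPotential_succ, hW.potential_eq, add_assoc, killedAvg_eq, killedAvg_eq]
      calc g + avg d (Aᶜ.indicator (partialPotential d A g T))
          ≤ g + avg d ((A ∪ O)ᶜ.indicator (potential d (A ∪ O) g) + M • h) :=
            add_le_add_right (avg_mono hind) g
        _ ≤ _ := by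
          rw [map_add, map_smul]
          gcongr
          exact hh.avg_le
  exact fun x => le_of_tendsto' (hφ.tendsto_partialPotential x) fun T => hpart T x

/-! ### Symmetry of the killed Green function -/

lemma killedAvg_single_of_mem {W : Set (Pt d)} {y : Pt d} (hy : y ∈ W) :
    killedAvg d W (Pi.single y 1) = 0 := by
  rw [killedAvg_eq, Set.indicator_eq_zero'.2, map_zero]
  rw [Set.disjoint_left]
  intro v hv hvW
  obtain rfl : v = y := by
    by_contra hne
    simp [hne] at hv
  exact hvW hy

lemma killedAvg_single_of_notMem {W : Set (Pt d)} {y : Pt d} (hy : y ∉ W) :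
    killedAvg d W (Pi.single y 1) = (2 * d : ℝ)⁻¹ • ∑ e ∈ steps d, Pi.single (y + e) 1 := by
  classical
  funext x
  have hind : Wᶜ.indicator (Pi.single y (1 : ℝ) : Pt d → ℝ) = Pi.single y 1 := by
    refine Set.indicator_eq_self.2 fun v hv => ?_
    obtain rfl : v = y := by
      by_contra hne
      simp [hne] at hv
    exact hy
  rw [killedAvg_eq, hind, avg_apply, div_eq_inv_mul, Pi.smul_apply, smul_eq_mul, Finset.sum_apply]
  congr 1
  refine Finset.sum_nbij' (fun e => -e) (fun e => -e) (fun _ => neg_mem_steps)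
    (fun _ => neg_mem_steps) (by simp) (by simp) fun e _ => ?_
  simp [Pi.single_apply, eq_add_neg_iff_add_eq]

lemma killedAvg_pow_single_of_mem {W : Set (Pt d)} {x y : Pt d} (hx : x ∉ W) (hy : y ∈ W) (t : ℕ) :
    (killedAvg d W ^ t) (Pi.single y 1) x = 0 := by
  cases t with
  | zero => simp [ne_of_mem_of_not_mem hy hx |>.symm]
  | succ t => simp [pow_succ, killedAvg_single_of_mem hy]

lemma killedAvg_pow_single_symm {W : Set (Pt d)} {x y : Pt d} (hx : x ∉ W) (hy : y ∉ W) (t : ℕ) :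
    (killedAvg d W ^ t) (Pi.single y 1) x = (killedAvg d W ^ t) (Pi.single x 1) y := by
  classical
  induction t generalizing y with
  | zero => simp [Pi.single_apply, eq_comm]
  | succ t ih =>
    rw [pow_succ, Module.End.mul_apply, killedAvg_single_of_notMem hy, ← pow_succ, pow_succ',
      Module.End.mul_apply, killedAvg_eq, avg_apply, div_eq_inv_mul, map_smul, map_sum,
      Pi.smul_apply, smul_eq_mul, Finset.sum_apply]
    congr 1
    refine Finset.sum_congr rfl fun e _ => ?_
    by_cases he : y + e ∈ W
    · simp [he, killedAvg_pow_single_of_mem hx he]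
    · simp [he, ih he]

lemma potential_single_symm {W : Set (Pt d)} {x y : Pt d} (hx : x ∉ W) (hy : y ∉ W) :
    potential d W (Pi.single y 1) x = potential d W (Pi.single x 1) y :=
  tsum_congr fun t => killedAvg_pow_single_symm hx hy t

/-! ### The maximum principle -/

lemma exists_lt_avg_lt {f : Pt d → ℝ} {m : ℝ} (hd : 0 < d) (hle : ∀ v, f v ≤ m)
    (hfin : {v | f v = m}.Finite) (hne : {v | f v = m}.Nonempty) :
    ∃ v, f v = m ∧ avg d f v < m := by
  let i : Fin d := ⟨0, hd⟩
  obtain ⟨p, hp, hpmax⟩ := Set.exists_max_image _ (fun v : Pt d => v i) hfin hne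
  refine ⟨p, hp, ?_⟩
  have hlt : f (p + Pi.single i 1) < m := (hle _).lt_of_ne fun heq => by
    simpa using hpmax _ heq
  rw [← congrFun (avg_const hd m) p, avg_apply, avg_apply]
  refine div_lt_div_of_pos_right ?_ (by positivity)
  exact Finset.sum_lt_sum (fun e _ => hle _) ⟨_, mem_steps.2 ⟨i, .inl rfl⟩, hlt⟩

lemma nonpos_of_le_avg (hd : 0 < d) {f : Pt d → ℝ} (hsub : ∀ x, 0 < f x → f x ≤ avg d f x)
    (hfin : ∀ ε : ℝ, 0 < ε → {x | ε < f x}.Finite) (x : Pt d) : f x ≤ 0 := by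
  by_contra! hx
  obtain ⟨m, hm, hmmax⟩ := Set.exists_max_image _ f (hfin (f x / 2) (half_pos hx))
    ⟨x, half_lt_self hx⟩
  have hxm : f x ≤ f m := hmmax x (half_lt_self hx)
  have hle (v : Pt d) : f v ≤ f m := by
    by_cases hv : f x / 2 < f v
    · exact hmmax v hv
    · linarith
  have hfin' : {v | f v = f m}.Finite :=
    (hfin (f x / 2) (half_pos hx)).subset fun v (hv : f v = f m) => by
      simpa only [Set.mem_ofPred_eq, hv] using hm
  obtain ⟨p, hp, hlt⟩ := exists_lt_avg_lt hd hle hfin' ⟨m, rfl⟩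
  linarith [hsub p (by linarith)]

/-! ### Radial super- and subharmonic functions -/

open Asymptotics Filter Topology in
lemma exists_abs_rpow_one_add_sub_le (p : ℝ) {ε : ℝ} (hε : 0 < ε) :
    ∃ r : ℝ, 0 < r ∧ r ≤ 1 ∧ ∀ h : ℝ, |h| ≤ r →
      |(1 + h) ^ p - (1 + p * h + p * (p - 1) / 2 * h ^ 2)| ≤ ε * h ^ 2 := by
  have hpartial (h : ℝ) : (binomialSeries ℝ p).partialSum 3 h =
      1 + p * h + p * (p - 1) / 2 * h ^ 2 := by
    simp only [FormalMultilinearSeries.partialSum, binomialSeries, Ring.choose_eq_smul, smul_eq_mul,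
      FormalMultilinearSeries.apply_eq_prod_smul_coeff, Finset.prod_const, Finset.card_univ,
      Fintype.card_fin, FormalMultilinearSeries.coeff_ofScalars, Finset.sum_range_succ,
      Finset.range_one, Finset.sum_singleton, pow_zero, Nat.factorial_zero, Nat.cast_one, inv_one,
      descPochhammer, Polynomial.smeval_one, one_smul, mul_one, pow_one, Nat.factorial_one,
      Polynomial.one_comp, Polynomial.smeval_X, one_mul, Nat.factorial_two, Nat.cast_ofNat,
      Polynomial.X_comp, Polynomial.smeval_mul, Polynomial.smeval_sub]
    ring
  have hO := (Real.one_add_rpow_hasFPowerSeriesAt_zero (a := p)).isBigO_sub_partialSum_pow 3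
  have ho : (fun h : ℝ => ‖h‖ ^ 3) =o[𝓝 0] fun h => h ^ 2 := by
    simpa only [norm_pow] using (isLittleO_pow_pow (𝕜 := ℝ) (show 2 < 3 by norm_num)).norm_left
  obtain ⟨r, hr, hball⟩ := Metric.eventually_nhds_iff_ball.1 ((hO.trans_isLittleO ho).def hε)
  refine ⟨min (r / 2) 1, by positivity, min_le_right _ _, fun h hh => ?_⟩
  have hhr : h ∈ Metric.ball 0 r := by
    rw [mem_ball_zero_iff, Real.norm_eq_abs]
    linarith [hh.trans (min_le_left _ _)]
  simpa [hpartial] using hball h hhr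

/-- The squared Euclidean norm of a lattice point. -/
noncomputable def normSq (v : Pt d) : ℝ := ∑ i, (v i : ℝ) ^ 2

lemma normSq_nonneg (v : Pt d) : 0 ≤ normSq v := Finset.sum_nonneg fun _ _ => sq_nonneg _

lemma sq_le_normSq (v : Pt d) (i : Fin d) : (v i : ℝ) ^ 2 ≤ normSq v :=
  Finset.single_le_sum (f := fun j => (v j : ℝ) ^ 2) (fun _ _ => sq_nonneg _) (Finset.mem_univ i)

lemma normSq_zero : normSq (0 : Pt d) = 0 := by simp [normSq]

lemma normSq_neg (v : Pt d) : normSq (-v) = normSq v := by simp [normSq]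

lemma normSq_single (i : Fin d) (c : ℤ) : normSq (Pi.single i c : Pt d) = (c : ℝ) ^ 2 := by
  simp [normSq, Pi.single_apply, ite_pow]

lemma normSq_add_single (v : Pt d) (i : Fin d) (c : ℤ) :
    normSq (v + Pi.single i c) = normSq v + 2 * c * v i + (c : ℝ) ^ 2 := by
  have hexpand (j : Fin d) : (((v + Pi.single i c : Pt d) j : ℤ) : ℝ) ^ 2 =
      (v j : ℝ) ^ 2 + (if j = i then 2 * (c : ℝ) * v i + (c : ℝ) ^ 2 else 0) := by
    split_ifs with h
    · subst h
      simp only [Pi.add_apply, Pi.single_eq_same, Int.cast_add]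
      ring
    · simp [h]
  simp only [normSq, hexpand, Finset.sum_add_distrib, Finset.sum_ite_eq', Finset.mem_univ, if_true,
    add_assoc]

/-- The radial comparison function `(|v|² + a)^(-β)`: for large `a` it is superharmonic if
`2 * (β + 1) < d`, and it is subharmonic away from the origin if `d < 2 * (β + 1)`. -/
noncomputable def radial (a β : ℝ) (v : Pt d) : ℝ := (normSq v + a) ^ (-β)

lemma radial_nonneg {a : ℝ} (ha : 0 ≤ a) (β : ℝ) : 0 ≤ radial (d := d) a β :=
  fun v => Real.rpow_nonneg (add_nonneg (normSq_nonneg v) ha) _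

lemma radial_pos {a : ℝ} (ha : 0 < a) (β : ℝ) (v : Pt d) : 0 < radial a β v :=
  Real.rpow_pos_of_pos (add_pos_of_nonneg_of_pos (normSq_nonneg v) ha) _

lemma avg_radial {a β : ℝ} {v : Pt d} (ha : 0 ≤ a)
    (hv : ∀ i, |2 * (v i : ℝ) / (normSq v + a + 1)| ≤ 1) :
    avg d (radial a β) v = (normSq v + a + 1) ^ (-β) *
      ((∑ i, ((1 + 2 * (v i : ℝ) / (normSq v + a + 1)) ^ (-β) +
        (1 + -(2 * (v i : ℝ) / (normSq v + a + 1))) ^ (-β))) / (2 * d)) := by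
  have hs : 0 < normSq v + a + 1 := by linarith [normSq_nonneg v]
  rw [avg_apply, sum_steps (fun e => radial a β (v + e)), ← mul_div_assoc, Finset.mul_sum]
  congr 1
  refine Finset.sum_congr rfl fun i _ => ?_
  obtain ⟨hlow, hup⟩ := abs_le.1 (hv i)
  rw [radial, radial, normSq_add_single, normSq_add_single, mul_add,
    ← Real.mul_rpow hs.le (by linarith), ← Real.mul_rpow hs.le (by linarith)]
  congr 2 <;> · push_cast; field_simp; ring

lemma radial_eq {a : ℝ} (ha : 0 ≤ a) (β : ℝ) (v : Pt d) :
    radial a β v = (normSq v + a + 1) ^ (-β) * (1 + -(1 / (normSq v + a + 1))) ^ (-β) := by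
  have hs : 0 < normSq v + a + 1 := by linarith [normSq_nonneg v]
  have hfactor : normSq v + a = (normSq v + a + 1) * (1 + -(1 / (normSq v + a + 1))) := by
    field_simp
    ring
  rw [radial, ← Real.mul_rpow hs.le]
  · rw [← hfactor]
  · rw [← sub_eq_add_neg, sub_nonneg, div_le_one hs]
    linarith [normSq_nonneg v]

lemma abs_le_of_le_normSq {a r : ℝ} {v : Pt d} (hr : 0 < r) (ha : 0 ≤ a)
    (hs : 4 / r ^ 2 ≤ normSq v + a + 1) (i : Fin d) :
    |2 * (v i : ℝ) / (normSq v + a + 1)| ≤ r := by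
  have hs0 : 0 < normSq v + a + 1 := by linarith [normSq_nonneg v]
  refine abs_le_of_sq_le_sq ?_ hr.le
  rw [div_le_iff₀ (by positivity)] at hs
  rw [div_pow, div_le_iff₀ (by positivity)]
  nlinarith [sq_le_normSq v i]

lemma abs_sum_rpow_one_add_sub_le {ι : Type*} [Fintype ι] {p ε r : ℝ}
    (htaylor : ∀ h : ℝ, |h| ≤ r →
      |(1 + h) ^ p - (1 + p * h + p * (p - 1) / 2 * h ^ 2)| ≤ ε * h ^ 2)
    {h : ι → ℝ} (hr : ∀ i, |h i| ≤ r) :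
    |∑ i, ((1 + h i) ^ p + (1 + -h i) ^ p) -
      (2 * Fintype.card ι + p * (p - 1) * ∑ i, h i ^ 2)| ≤ 2 * ε * ∑ i, h i ^ 2 := by
  have hpair (i : ι) : |((1 + h i) ^ p + (1 + -h i) ^ p) - (2 + p * (p - 1) * h i ^ 2)| ≤
      2 * ε * h i ^ 2 := by
    have hplus := htaylor (h i) (hr i)
    have hminus := htaylor (-h i) (by simpa only [abs_neg] using hr i)
    rw [abs_le] at hplus hminus ⊢
    constructor <;> linarith
  have htotal := (Finset.abs_sum_le_sum_abs _ Finset.univ).trans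
    (Finset.sum_le_sum fun i _ => hpair i)
  rwa [Finset.sum_sub_distrib, Finset.sum_add_distrib (f := fun _ => (2 : ℝ)), ← Finset.mul_sum,
    ← Finset.mul_sum, Finset.sum_const, Finset.card_univ, nsmul_eq_mul, mul_comm _ (2 : ℝ)]
    at htotal

lemma abs_avg_radial_sub_le {a β ε r : ℝ} {v : Pt d} (hd : 0 < d) (hr : 0 < r) (hr1 : r ≤ 1)
    (htaylor : ∀ h : ℝ, |h| ≤ r →
      |(1 + h) ^ (-β) - (1 + -β * h + -β * (-β - 1) / 2 * h ^ 2)| ≤ ε * h ^ 2)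
    (ha : 0 ≤ a) (hs : 4 / r ^ 2 ≤ normSq v + a + 1) :
    |avg d (radial a β) v - (normSq v + a + 1) ^ (-β) *
      (1 + β * (β + 1) / 2 * (4 * normSq v / (normSq v + a + 1) ^ 2) / d)| ≤
      (normSq v + a + 1) ^ (-β) * (ε * (4 * normSq v / (normSq v + a + 1) ^ 2) / d) := by
  have hsmall := abs_le_of_le_normSq hr ha hs
  have herror := abs_sum_rpow_one_add_sub_le htaylor hsmall
  rw [avg_radial ha fun i => (hsmall i).trans hr1]
  set s := normSq v + a + 1
  set S := ∑ i, ((1 + 2 * (v i : ℝ) / s) ^ (-β) + (1 + -(2 * (v i : ℝ) / s)) ^ (-β))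
  have hs0 : 0 ≤ s ^ (-β) := Real.rpow_nonneg (by linarith [normSq_nonneg v]) _
  have hsum : ∑ i, (2 * (v i : ℝ) / s) ^ 2 = 4 * normSq v / s ^ 2 := by
    simp only [div_pow, mul_pow, ← Finset.sum_div, ← Finset.mul_sum, normSq]
    norm_num
  rw [hsum, Fintype.card_fin] at herror
  have hd' : (0 : ℝ) < 2 * d := by positivity
  have hquot : S / (2 * d) - (1 + β * (β + 1) / 2 * (4 * normSq v / s ^ 2) / d) =
      (S - (2 * d + -β * (-β - 1) * (4 * normSq v / s ^ 2))) / (2 * d) := by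
    field_simp
    ring
  rw [← mul_sub, abs_mul, abs_of_nonneg hs0, hquot, abs_div, abs_of_pos hd']
  refine mul_le_mul_of_nonneg_left ?_ hs0
  rw [div_le_iff₀ hd']
  refine herror.trans_eq ?_
  field_simp

lemma one_add_div_le_rpow {β s : ℝ} (hβ : 0 ≤ β) (hs : 1 < s) :
    1 + β / s ≤ (1 + -(1 / s)) ^ (-β) := by
  have hpos : 0 < 1 + -(1 / s) := by
    have := (div_lt_one (by linarith)).2 hs
    linarith
  calc 1 + β / s ≤ Real.exp (β / s) := by linarith [Real.add_one_le_exp (β / s)]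
    _ = Real.exp (-(1 / s)) ^ (-β) := by rw [← Real.exp_mul]; ring_nf
    _ ≤ (1 + -(1 / s)) ^ (-β) := Real.rpow_le_rpow_of_nonpos hpos
      (by linarith [Real.add_one_le_exp (-(1 / s))]) (by linarith)

lemma exists_avg_radial_le (hd : 0 < d) {β : ℝ} (hβ : 0 < β) (hβd : 2 * (β + 1) < d) :
    ∃ a₀ : ℝ, 1 ≤ a₀ ∧ ∀ a, a₀ ≤ a → avg d (radial a β) ≤ radial a β := by
  obtain ⟨ε, hε, hεd⟩ : ∃ ε : ℝ, 0 < ε ∧ (β * (β + 1) / 2 + ε) * 4 = β * d :=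
    ⟨β * (d - 2 * (β + 1)) / 4, by have := sub_pos.2 hβd; positivity, by ring⟩
  obtain ⟨r, hr, hr1, htaylor⟩ := exists_abs_rpow_one_add_sub_le (-β) hε
  have hr4 : 0 < 4 / r ^ 2 := by positivity
  refine ⟨4 / r ^ 2 + 1, by linarith, fun a ha v => ?_⟩
  have hv := normSq_nonneg v
  have havg := (abs_le.1 (abs_avg_radial_sub_le hd hr hr1 htaylor (v := v)
    (by linarith : 0 ≤ a) (by linarith))).2
  rw [radial_eq (by linarith : 0 ≤ a)]
  set s := normSq v + a + 1
  have hs0 : 0 < s := by linarith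
  have hgrad : 4 * normSq v / s ^ 2 ≤ 4 / s := by
    rw [div_le_div_iff₀ (by positivity) hs0]
    nlinarith
  calc avg d (radial a β) v
      ≤ s ^ (-β) * (1 + (β * (β + 1) / 2 + ε) * (4 * normSq v / s ^ 2) / d) := by
        rw [add_mul, add_div, ← add_assoc, mul_add]
        linarith
    _ ≤ s ^ (-β) * (1 + (β * (β + 1) / 2 + ε) * (4 / s) / d) := by gcongr
    _ = s ^ (-β) * (1 + β / s) := by
        rw [← mul_div_assoc, hεd]
        field_simp
    _ ≤ s ^ (-β) * (1 + -(1 / s)) ^ (-β) := by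
        gcongr
        exact one_add_div_le_rpow hβ.le (by linarith)

lemma rpow_one_add_neg_le {β ε r s : ℝ} (hr : 0 < r) (hr1 : r ≤ 1)
    (htaylor : ∀ h : ℝ, |h| ≤ r →
      |(1 + h) ^ (-β) - (1 + -β * h + -β * (-β - 1) / 2 * h ^ 2)| ≤ ε * h ^ 2)
    (hs : 4 / r ^ 2 ≤ s) :
    (1 + -(1 / s)) ^ (-β) ≤ 1 + (β * s + (β * (β + 1) / 2 + ε)) / s ^ 2 := by
  have hs0 : 0 < s := (show 0 < 4 / r ^ 2 by positivity).trans_le hs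
  have hsr : |(-(1 / s))| ≤ r := by
    rw [abs_neg, abs_of_pos (by positivity), div_le_iff₀ hs0]
    rw [div_le_iff₀ (by positivity)] at hs
    nlinarith
  calc (1 + -(1 / s)) ^ (-β)
      ≤ 1 + -β * -(1 / s) + -β * (-β - 1) / 2 * (-(1 / s)) ^ 2 + ε * (-(1 / s)) ^ 2 := by
        linear_combination (abs_le.1 (htaylor _ hsr)).2
    _ = 1 + (β * s + (β * (β + 1) / 2 + ε)) / s ^ 2 := by
        field_simp
        ring

lemma exists_radial_le_avg (hd : 0 < d) {a β : ℝ} (ha : 0 ≤ a) (hβ : 0 < β)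
    (hβd : (d : ℝ) < 2 * (β + 1)) :
    ∃ R : ℝ, ∀ v : Pt d, R ≤ normSq v → radial a β v ≤ avg d (radial a β) v := by
  have hd' : (0 : ℝ) < d := by exact_mod_cast hd
  obtain ⟨κ, hκ, hκd⟩ : ∃ κ : ℝ, 0 < κ ∧ 2 * β * (β + 1) = β * d + κ :=
    ⟨β * (2 * (β + 1) - d), by have := sub_pos.2 hβd; positivity, by ring⟩
  obtain ⟨r, hr, hr1, htaylor⟩ := exists_abs_rpow_one_add_sub_le (-β) (by positivity : 0 < κ / 8)
  set C := β * (β + 1) / 2 with hC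
  have hr4 : 0 < 4 / r ^ 2 := by positivity
  have hfar : 0 ≤ 2 * (β * (a + 1) * d + (C + κ / 8) * d) / κ := by positivity
  refine ⟨4 / r ^ 2 + 2 * (β * (a + 1) * d + (C + κ / 8) * d) / κ, fun v hv => ?_⟩
  have hvr : 4 / r ^ 2 ≤ normSq v + a + 1 := by linarith only [hv, hfar, ha]
  have hvκ : 2 * (β * (a + 1) * d + (C + κ / 8) * d) ≤ normSq v * κ :=
    (div_le_iff₀ hκ).1 (by linarith only [hv, hr4])
  have havg := (abs_le.1 (abs_avg_radial_sub_le hd hr hr1 htaylor ha hvr)).1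
  rw [radial_eq ha]
  set s := normSq v + a + 1 with hs
  have : 0 ≤ s := hr4.le.trans hvr
  calc s ^ (-β) * (1 + -(1 / s)) ^ (-β)
      ≤ s ^ (-β) * (1 + (β * s + (C + κ / 8)) / s ^ 2) := by
        gcongr
        exact rpow_one_add_neg_le hr hr1 htaylor hvr
    _ ≤ s ^ (-β) * (1 + (4 * (C - κ / 8) * normSq v / d) / s ^ 2) := by
        gcongr
        rw [le_div_iff₀ hd']
        linear_combination hvκ / 2 - normSq v * hκd + d * β * hs + 4 * normSq v * hC
    _ = s ^ (-β) * (1 + C * (4 * normSq v / s ^ 2) / d) -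
          s ^ (-β) * (κ / 8 * (4 * normSq v / s ^ 2) / d) := by ring
    _ ≤ avg d (radial a β) v := by linear_combination havg

/-! ### Bounds on the Green function -/

lemma dist0_eq (x y : Pt d) : dist0 d x y = √(normSq (x - y)) := by
  simp [dist0, normSq]

lemma dist0_sq (x y : Pt d) : dist0 d x y ^ 2 = normSq (x - y) := by
  rw [dist0_eq, Real.sq_sqrt (normSq_nonneg _)]

lemma dist0_nonneg (x y : Pt d) : 0 ≤ dist0 d x y := Real.sqrt_nonneg _

lemma dist0_comm (x y : Pt d) : dist0 d x y = dist0 d y x := by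
  rw [dist0_eq, dist0_eq, ← neg_sub, normSq_neg]

lemma dist0_eq_dist (x y : Pt d) :
    dist0 d x y = dist (WithLp.toLp 2 fun i => (x i : ℝ) : EuclideanSpace ℝ (Fin d))
      (WithLp.toLp 2 fun i => (y i : ℝ)) := by
  simp [EuclideanSpace.dist_eq, dist0, Real.dist_eq]

lemma dist0_triangle (x y z : Pt d) : dist0 d x z ≤ dist0 d x y + dist0 d y z := by
  simpa only [dist0_eq_dist] using dist_triangle _ _ _

lemma dist0_add_single_left (x : Pt d) (i : Fin d) (c : ℤ) :
    dist0 d (x + Pi.single i c) x = |(c : ℝ)| := by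
  rw [dist0_eq, add_sub_cancel_left, normSq_single, Real.sqrt_sq_eq_abs]

lemma dist0_add_step {e : Pt d} (he : e ∈ steps d) (x : Pt d) : dist0 d (x + e) x = 1 := by
  obtain ⟨i, rfl | rfl⟩ := mem_steps.1 he <;> simp [dist0_add_single_left]

lemma sum_natAbs_le_normSq (v : Pt d) : ((∑ i, (v i).natAbs : ℕ) : ℝ) ≤ normSq v := by
  rw [normSq, Nat.cast_sum]
  refine Finset.sum_le_sum fun i _ => ?_
  rw [Nat.cast_natAbs]
  exact_mod_cast Int.natAbs_le_self_sq (v i)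

lemma finite_normSq_sub_le (y : Pt d) (B : ℝ) : {v | normSq (v - y) ≤ B}.Finite := by
  obtain ⟨n, hn⟩ := exists_nat_gt B
  refine (Set.finite_Icc (y - fun _ => (n : ℤ)) (y + fun _ => (n : ℤ))).subset fun v hv => ?_
  have hcoord (i : Fin d) : (v i - y i).natAbs ≤ n := by
    have hsum : ∑ i, ((v - y) i).natAbs ≤ n := by
      exact_mod_cast (sum_natAbs_le_normSq (v - y)).trans (le_trans hv hn.le)
    exact (Finset.single_le_sum (f := fun i => ((v - y) i).natAbs) (fun _ _ => Nat.zero_le _)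
      (Finset.mem_univ i)).trans hsum
  refine ⟨fun i => ?_, fun i => ?_⟩ <;>
    · have := hcoord i
      simp only [Pi.sub_apply, Pi.add_apply]
      omega

lemma avg_radial_zero_lt (hd : 0 < d) {a β : ℝ} (ha : 0 < a) (hβ : 0 < β) :
    avg d (radial a β) 0 < radial a β (0 : Pt d) := by
  have hsphere : avg d (radial a β) 0 = avg d (fun _ => (1 + a) ^ (-β)) 0 := by
    simp only [avg_apply]
    congr 1
    refine Finset.sum_congr rfl fun e he => ?_
    rw [radial, zero_add, ← sub_zero e, ← dist0_sq, ← zero_add e, dist0_add_step he, one_pow]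
  rw [hsphere, avg_const hd, radial, normSq_zero, zero_add]
  exact Real.rpow_lt_rpow_of_neg ha (by linarith) (by linarith)

lemma exists_isSupersolution_single (hd : 0 < d) {a β : ℝ} (ha : 0 < a) (hβ : 0 < β)
    (hsuper : avg d (radial a β) ≤ radial a β) :
    ∃ K : ℝ, 0 < K ∧
      ∀ y, IsSupersolution ∅ (Pi.single y 1) fun v : Pt d => K * radial a β (v - y) := by
  have hgap := sub_pos.2 (avg_radial_zero_lt (d := d) hd ha hβ)
  obtain ⟨K, hK, hK_mul⟩ : ∃ K : ℝ, 0 < K ∧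
      K * (radial a β (0 : Pt d) - avg d (radial a β) 0) = 1 :=
    ⟨_, inv_pos.2 hgap, inv_mul_cancel₀ hgap.ne'⟩
  refine ⟨K, hK, fun y => ⟨Pi.single_nonneg.2 zero_le_one,
    fun v => mul_nonneg hK.le (radial_nonneg ha.le β _), fun v => ?_⟩⟩
  have havg : avg d (fun v => K * radial a β (v - y)) v = K * avg d (radial a β) (v - y) := by
    rw [← avg_translate, ← smul_eq_mul, ← Pi.smul_apply, ← map_smul]
    rfl
  rw [killedAvg_empty, Pi.add_apply, havg]
  by_cases hv : v = y
  · subst hv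
    rw [Pi.single_eq_same, sub_self, ← le_sub_iff_add_le, ← mul_sub, hK_mul]
  · rw [Pi.single_eq_of_ne hv, zero_add]
    exact mul_le_mul_of_nonneg_left (hsuper _) hK.le

lemma exists_step_sum_natAbs_lt {v : Pt d} (hv : v ≠ 0) :
    ∃ e ∈ steps d, ∑ i, ((v + e) i).natAbs + 1 = ∑ i, (v i).natAbs := by
  obtain ⟨i, hi⟩ := Function.ne_iff.1 hv
  rw [Pi.zero_apply] at hi
  obtain ⟨c, hc, hci⟩ : ∃ c : ℤ, (c = 1 ∨ c = -1) ∧ (v i + c).natAbs + 1 = (v i).natAbs := by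
    rcases lt_or_gt_of_ne hi with hneg | hpos
    exacts [⟨1, .inl rfl, by omega⟩, ⟨-1, .inr rfl, by omega⟩]
  refine ⟨Pi.single i c, mem_steps.2 ⟨i, hc.imp (congrArg _) (congrArg _)⟩, ?_⟩
  rw [← Finset.add_sum_erase _ _ (Finset.mem_univ i),
    ← Finset.add_sum_erase _ (fun i => (v i).natAbs) (Finset.mem_univ i)]
  have hrest : ∑ j ∈ Finset.univ.erase i, ((v + Pi.single i c : Pt d) j).natAbs =
      ∑ j ∈ Finset.univ.erase i, (v j).natAbs :=
    Finset.sum_congr rfl fun j hj => by simp [Finset.ne_of_mem_erase hj]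
  rw [hrest, Pi.add_apply, Pi.single_eq_same]
  omega

lemma inv_pow_le_potential_single {y : Pt d} {φ : Pt d → ℝ}
    (h : IsSupersolution ∅ (Pi.single y 1) φ) (v : Pt d) :
    ((2 * d : ℝ) ^ ∑ i, ((v - y) i).natAbs)⁻¹ ≤ potential d ∅ (Pi.single y 1) v := by
  induction hk : ∑ i, ((v - y) i).natAbs generalizing v with
  | zero =>
    obtain rfl : v = y := by
      funext i
      have := Finset.sum_eq_zero_iff.1 hk i (Finset.mem_univ i)
      rw [Pi.sub_apply] at this
      omega
    have := killedAvg_nonneg ∅ (potential_nonneg ∅ h.source_nonneg) v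
    rw [h.potential_eq, Pi.add_apply, Pi.single_eq_same, pow_zero, inv_one]
    simpa using this
  | succ k ih =>
    have hvy : v - y ≠ 0 := fun h0 => by
      rw [h0] at hk
      simp at hk
    obtain ⟨e, he, hsum⟩ := exists_step_sum_natAbs_lt hvy
    rw [← add_sub_right_comm] at hsum
    refine le_trans ?_ (h.div_le_potential he (x := v) (Set.notMem_empty _))
    rw [pow_succ, mul_inv, ← div_eq_mul_inv]
    gcongr
    exact ih _ (by omega)

lemma mul_radial_le_potential_of_normSq_le (hd : 0 < d) {β : ℝ} (hβ : 0 < β) {y : Pt d}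
    {φ : Pt d → ℝ} (h : IsSupersolution ∅ (Pi.single y 1) φ) {n : ℕ} {v : Pt d}
    (hv : normSq (v - y) ≤ n) :
    ((2 * d : ℝ) ^ n)⁻¹ * radial 1 β (v - y) ≤ potential d ∅ (Pi.single y 1) v := by
  have : (1 : ℝ) ≤ 2 * d := by
    have : (1 : ℝ) ≤ d := by exact_mod_cast hd
    linarith
  have hradial : radial 1 β (v - y) ≤ 1 := Real.rpow_le_one_of_one_le_of_nonpos
    (by linarith [normSq_nonneg (v - y)]) (by linarith)
  have : ∑ i, ((v - y) i).natAbs ≤ n := by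
    exact_mod_cast (sum_natAbs_le_normSq (v - y)).trans hv
  refine (mul_le_of_le_one_right (by positivity) hradial).trans
    (le_trans ?_ (inv_pow_le_potential_single h v))
  gcongr

lemma finite_lt_radial_sub {a β c : ℝ} (hβ : 0 < β) (hc : 0 < c) (y : Pt d) {ε : ℝ} (hε : 0 < ε) :
    {v | ε < c * radial a β (v - y)}.Finite := by
  obtain ⟨B, hB⟩ := Filter.eventually_atTop.1
    ((tendsto_rpow_neg_atTop hβ).eventually_lt_const (div_pos hε hc))
  refine (finite_normSq_sub_le y (B - a)).subset fun v hv => ?_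
  rw [Set.mem_ofPred_eq] at hv ⊢
  by_contra! hfar
  have := hB (normSq (v - y) + a) (by linarith)
  rw [lt_div_iff₀' hc] at this
  exact lt_asymm hv this

lemma exists_mul_radial_le_potential (hd : 0 < d) {β : ℝ} (hβ : 0 < β)
    (hβd : (d : ℝ) < 2 * (β + 1)) {φ : Pt d → Pt d → ℝ}
    (h : ∀ y, IsSupersolution ∅ (Pi.single y 1) (φ y)) :
    ∃ c : ℝ, 0 < c ∧
      ∀ y v, c * radial 1 β (v - y) ≤ potential d ∅ (Pi.single y 1) v := by
  obtain ⟨R, hR⟩ := exists_radial_le_avg hd zero_le_one hβ hβd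
  obtain ⟨n, hn⟩ := exists_nat_gt R
  have hc : (0 : ℝ) < ((2 * d : ℝ) ^ n)⁻¹ := by positivity
  refine ⟨((2 * d : ℝ) ^ n)⁻¹, hc, fun y v => ?_⟩
  let f : Pt d → ℝ :=
    ((2 * d : ℝ) ^ n)⁻¹ • (fun v => radial 1 β (v - y)) - potential d ∅ (Pi.single y 1)
  have hpot := potential_nonneg ∅ (h y).source_nonneg
  have hf_sub (v : Pt d) (hv : 0 < f v) : f v ≤ avg d f v := by
    have hfar : R ≤ normSq (v - y) := not_lt.1 fun hnear => hv.not_ge <| sub_nonpos.2 <|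
      mul_radial_le_potential_of_normSq_le hd hβ (h y) (hnear.trans hn).le
    have hsource : (0 : ℝ) ≤ Pi.single (M := fun _ => ℝ) y 1 v := (h y).source_nonneg v
    have hpot_eq := congrFun (h y).potential_eq v
    rw [killedAvg_empty, Pi.add_apply] at hpot_eq
    have havg : avg d f v = ((2 * d : ℝ) ^ n)⁻¹ * avg d (radial 1 β) (v - y) -
        avg d (potential d ∅ (Pi.single y 1)) v := by
      rw [map_sub, map_smul, Pi.sub_apply, Pi.smul_apply, avg_translate, smul_eq_mul]
    rw [havg]
    exact sub_le_sub (mul_le_mul_of_nonneg_left (hR _ hfar) hc.le) (by linarith)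
  refine sub_nonpos.1 (nonpos_of_le_avg hd hf_sub (fun ε hε => ?_) v)
  exact (finite_lt_radial_sub hβ hc y hε).subset fun v hv => hv.trans_le (sub_le_self _ (hpot v))

/-! ### Escaping from a small set -/

lemma exists_two_mul_sq_le_normSq {A : Finset (Pt d)} (hA : A.card < d) (x : Pt d) :
    ∃ k : Fin d, ∀ a ∈ A, 2 * ((x - a) k : ℝ) ^ 2 ≤ normSq (x - a) := by
  classical
  let bad (a : Pt d) : Finset (Fin d) :=
    Finset.univ.filter fun k => normSq (x - a) < 2 * ((x - a) k : ℝ) ^ 2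
  have hbad (a : Pt d) (_ : a ∈ A) : (bad a).card ≤ 1 := by
    refine Finset.card_le_one.2 fun i hi j hj => ?_
    by_contra hij
    have hpair := Finset.sum_le_sum_of_subset_of_nonneg (f := fun k => ((x - a) k : ℝ) ^ 2)
      (Finset.subset_univ {i, j}) fun _ _ _ => sq_nonneg _
    rw [Finset.sum_pair hij, ← normSq] at hpair
    simp only [bad, Finset.mem_filter, Finset.mem_univ, true_and] at hi hj
    linarith
  by_contra! hcon
  have hcover : Finset.univ ⊆ A.biUnion bad := fun k _ => by
    obtain ⟨a, ha, hk⟩ := hcon k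
    exact Finset.mem_biUnion.2 ⟨a, ha, by simpa [bad] using hk⟩
  have hcard := (Finset.card_le_card hcover).trans (Finset.card_biUnion_le_card_mul A bad 1 hbad)
  rw [Finset.card_univ, Fintype.card_fin] at hcard
  omega

lemma sq_div_two_le_normSq_add_single {v : Pt d} {k : Fin d}
    (hk : 2 * (v k : ℝ) ^ 2 ≤ normSq v) (t : ℕ) :
    (t : ℝ) ^ 2 / 2 ≤ normSq (v + Pi.single k (t : ℤ)) := by
  rw [normSq_add_single]
  push_cast
  nlinarith [sq_nonneg ((t : ℝ) + 2 * (v k : ℝ))]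

lemma IsBarrier.sub_indicator_le_avg {A : Set (Pt d)} {g φ h : Pt d → ℝ} (hh : IsBarrier A h)
    (hφ : IsSupersolution A g φ) (hd : 0 < d) {m : ℝ} (hm : 0 ≤ m) {v : Pt d} (hv : v ∉ A) :
    (m • (1 - h) - Aᶜ.indicator (potential d A g)) v ≤
      avg d (m • (1 - h) - Aᶜ.indicator (potential d A g)) v := by
  have hpot_eq := congrFun hφ.potential_eq v
  rw [killedAvg_eq, Pi.add_apply] at hpot_eq
  have havg : avg d (m • (1 - h) - Aᶜ.indicator (potential d A g)) v =
      m * (1 - avg d h v) - avg d (Aᶜ.indicator (potential d A g)) v := by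
    have hone : avg d 1 = 1 := avg_const hd 1
    rw [map_sub, map_smul, map_sub, hone]
    rfl
  rw [havg, Pi.sub_apply, Set.indicator_of_mem (Set.mem_compl hv)]
  exact sub_le_sub (mul_le_mul_of_nonneg_left (sub_le_sub_left (hh.avg_le v) 1) hm)
    (by linarith only [hpot_eq, show 0 ≤ g v from hφ.source_nonneg v])

lemma IsBarrier.mul_one_sub_le_potential {A : Set (Pt d)} {g φ h : Pt d → ℝ} (hh : IsBarrier A h)
    (hφ : IsSupersolution A g φ) (hd : 0 < d) {o x : Pt d} {L m : ℝ} (hm : 0 ≤ m)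
    (hshell : ∀ w, L ≤ dist0 d w o → dist0 d w o ≤ L + 1 → w ∉ A → m ≤ potential d A g w)
    (hx : dist0 d x o < L) : m * (1 - h x) ≤ potential d A g x := by
  have hpot := potential_nonneg A hφ.source_nonneg
  let F : Pt d → ℝ := m • (1 - h) - Aᶜ.indicator (potential d A g)
  let ball : Set (Pt d) := {v | dist0 d v o < L}
  have hF_mem {v : Pt d} (hv : v ∈ A) : F v ≤ 0 := by
    have := mul_nonpos_of_nonneg_of_nonpos hm (sub_nonpos.2 (hh.one_le v hv))
    simpa [F, hv] using this
  have hF_shell {v : Pt d} (hv : v ∉ ball) (hvL : dist0 d v o ≤ L + 1) : F v ≤ 0 := by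
    by_cases hvA : v ∈ A
    · exact hF_mem hvA
    have := hshell v (not_lt.1 hv) hvL hvA
    have hFv : F v = m * (1 - h v) - potential d A g v := by simp [F, hvA]
    nlinarith [mul_nonneg hm (hh.nonneg v)]
  have hF_step {v e : Pt d} (he : e ∈ steps d) (hv : v ∈ ball) :
      F (v + e) ≤ ball.indicator F (v + e) := by
    by_cases hin : v + e ∈ ball
    · rw [Set.indicator_of_mem hin]
    rw [Set.indicator_of_notMem hin]
    exact hF_shell hin (by
      linarith [dist0_triangle (v + e) v o, dist0_add_step he v, show dist0 d v o < L from hv])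
  have hmax : ball.indicator F x ≤ 0 := by
    refine nonpos_of_le_avg hd (fun v hv => ?_) (fun ε hε => ?_) x
    · have hvb : v ∈ ball := Set.mem_of_indicator_ne_zero hv.ne'
      rw [Set.indicator_of_mem hvb] at hv ⊢
      refine (hh.sub_indicator_le_avg hφ hd hm fun hvA => hv.not_ge (hF_mem hvA)).trans ?_
      simp only [avg_apply]
      gcongr with e he
      exact hF_step he hvb
    · refine (finite_normSq_sub_le o (L ^ 2)).subset fun v hv => ?_
      have hvb : dist0 d v o < L :=
        Set.mem_of_indicator_ne_zero (f := F) (s := ball) (hε.trans hv).ne'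
      rw [Set.mem_ofPred_eq, ← dist0_sq]
      exact pow_le_pow_left₀ (dist0_nonneg _ _) hvb.le 2
  rw [Set.indicator_of_mem (show x ∈ ball from hx)] at hmax
  refine sub_nonpos.1 (le_trans (sub_le_sub_left ?_ _) hmax)
  exact Set.indicator_le_self' (fun _ _ => hpot _) x

/-! ### The Green function killed on a small set -/

/-- The barrier `v ↦ ∑_{z ∈ O} r (v - z) / r 0`, with `r = radial a β`, of the finite set `O`. -/
noncomputable def radialBarrier (a β : ℝ) (O : Finset (Pt d)) (v : Pt d) : ℝ :=
  ∑ z ∈ O, radial a β (v - z) / radial a β (0 : Pt d)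

lemma isBarrier_radialBarrier {a β : ℝ} (ha : 0 < a)
    (hsuper : avg d (radial a β) ≤ radial a β) (O : Finset (Pt d)) :
    IsBarrier ↑O (radialBarrier a β O) where
  nonneg v := Finset.sum_nonneg fun _ _ =>
    div_nonneg (radial_nonneg ha.le β _) (radial_nonneg ha.le β _)
  one_le v hv := by
    have := Finset.single_le_sum (f := fun z => radial a β (v - z) / radial a β (0 : Pt d))
      (fun _ _ => div_nonneg (radial_nonneg ha.le β _) (radial_nonneg ha.le β _)) hv
    rwa [sub_self, div_self (radial_pos ha β _).ne'] at this
  avg_le := by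
    have hsum : radialBarrier a β O =
        ∑ z ∈ O, (radial a β (0 : Pt d))⁻¹ • fun v => radial a β (v - z) := by
      funext v
      simp [radialBarrier, div_eq_inv_mul]
    rw [hsum, map_sum]
    refine Finset.sum_le_sum fun z _ v => ?_
    rw [map_smul, Pi.smul_apply, Pi.smul_apply, avg_translate]
    exact smul_le_smul_of_nonneg_left (hsuper _) (inv_nonneg.2 (radial_nonneg ha.le β _))

lemma radial_le_rpow {a β B : ℝ} (hβ : 0 ≤ β) (hB : 0 < B) {v : Pt d} (h : B ≤ normSq v + a) :
    radial a β v ≤ B ^ (-β) :=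
  Real.rpow_le_rpow_of_nonpos hB h (neg_nonpos.2 hβ)

lemma radial_le_radial_zero {a β : ℝ} (ha : 0 < a) (hβ : 0 ≤ β) (v : Pt d) :
    radial a β v ≤ radial a β (0 : Pt d) := by
  refine radial_le_rpow hβ ?_ ?_ <;> rw [normSq_zero, zero_add]
  · exact ha
  · exact le_add_of_nonneg_left (normSq_nonneg v)

lemma radialBarrier_le {a β B : ℝ} (ha : 0 ≤ a) (hβ : 0 ≤ β) (hB : 0 < B) {O : Finset (Pt d)}
    {v : Pt d} (h : ∀ z ∈ O, B ≤ normSq (v - z) + a) :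
    radialBarrier a β O v ≤ O.card * (B ^ (-β) / radial a β (0 : Pt d)) := by
  rw [← nsmul_eq_mul]
  refine Finset.sum_le_card_nsmul _ _ _ fun z hz => ?_
  gcongr
  · exact radial_nonneg ha β _
  · exact radial_le_rpow hβ hB (h z hz)

lemma exists_ray_notMem {A : Finset (Pt d)} (hA : A.card < d) {x : Pt d} (hx : x ∉ A) :
    ∃ k : Fin d, ∀ t : ℕ, x + Pi.single k (t : ℤ) ∉ A ∧
      ∀ z ∈ A, (t : ℝ) ^ 2 / 2 ≤ normSq (x + Pi.single k (t : ℤ) - z) := by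
  obtain ⟨k, hk⟩ := exists_two_mul_sq_le_normSq hA x
  have hfar (t : ℕ) (z : Pt d) (hz : z ∈ A) :
      (t : ℝ) ^ 2 / 2 ≤ normSq (x + Pi.single k (t : ℤ) - z) := by
    rw [add_sub_right_comm]
    exact sq_div_two_le_normSq_add_single (hk z hz) t
  refine ⟨k, fun t => ⟨fun hmem => ?_, hfar t⟩⟩
  have ht := hfar t _ hmem
  rw [sub_self, normSq_zero] at ht
  have ht0 : (t : ℝ) = 0 := by nlinarith
  obtain rfl : t = 0 := by exact_mod_cast ht0
  exact hx (by simpa using hmem)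

/- After `K` steps along a ray leading away from `A`, the barrier of `A` is at most `1 / 2`. -/
lemma div_pow_le_potential_of_shell {a β : ℝ} (ha : 0 < a) (hβ : 0 ≤ β)
    (hsuper : avg d (radial a β) ≤ radial a β) {K : ℕ}
    (hK : d * (((K : ℝ) ^ 2 / 2 + a) ^ (-β) / radial a β (0 : Pt d)) ≤ 1 / 2)
    {A : Finset (Pt d)} (hA : A.card < d) {g φ : Pt d → ℝ} (hφ : IsSupersolution (↑A) g φ)
    {o x : Pt d} {L m : ℝ} (hm : 0 ≤ m)
    (hshell : ∀ w, L ≤ dist0 d w o → dist0 d w o ≤ L + 1 → w ∉ A → m ≤ potential d (↑A) g w)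
    (hx : dist0 d x o + K < L) (hxA : x ∉ A) :
    m / 2 / (2 * d) ^ K ≤ potential d (↑A) g x := by
  have hd : 0 < d := (Nat.zero_le _).trans_lt hA
  obtain ⟨k, hk⟩ := exists_ray_notMem hA hxA
  have hray (t : ℕ) : x + t • Pi.single k (1 : ℤ) = x + Pi.single k (t : ℤ) := by
    rw [← Pi.single_smul, nsmul_one]
  have hfree (t : ℕ) (_ : t ≤ K) : x + t • Pi.single k (1 : ℤ) ∉ (A : Set (Pt d)) := by
    rw [hray]
    exact (hk t).1
  refine le_trans ?_ (hφ.div_pow_le_potential (mem_steps.2 ⟨k, .inl rfl⟩) hfree)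
  have hbarrier : radialBarrier a β A (x + Pi.single k (K : ℤ)) ≤ 1 / 2 := by
    refine (radialBarrier_le ha.le hβ (by positivity)
      fun z hz => add_le_add_left ((hk K).2 z hz) a).trans (le_trans ?_ hK)
    gcongr
    exact div_nonneg (by positivity) (radial_nonneg ha.le β _)
  have hball : dist0 d (x + Pi.single k (K : ℤ)) o < L := by
    have hK_dist := dist0_add_single_left x k K
    rw [Int.cast_natCast, abs_of_nonneg (Nat.cast_nonneg _)] at hK_dist
    linarith [dist0_triangle (x + Pi.single k (K : ℤ)) x o]
  have hescape := (isBarrier_radialBarrier ha hsuper A).mul_one_sub_le_potential hφ hd hm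
    hshell hball
  rw [hray]
  gcongr
  nlinarith

lemma exists_nat_mul_rpow_le (a C : ℝ) {β : ℝ} (hβ : 0 < β) {ε : ℝ} (hε : 0 < ε) :
    ∃ K : ℕ, C * ((K : ℝ) ^ 2 / 2 + a) ^ (-β) ≤ ε := by
  have hbase : Filter.Tendsto (fun K : ℕ => (K : ℝ) ^ 2 / 2 + a) .atTop .atTop :=
    Filter.tendsto_atTop_add_const_right _ _
      (((Filter.tendsto_pow_atTop two_ne_zero).comp tendsto_natCast_atTop_atTop).atTop_div_const
        two_pos)
  have hlim := ((tendsto_rpow_neg_atTop hβ).comp hbase).const_mul C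
  rw [mul_zero] at hlim
  exact (hlim.eventually_le_const hε).exists

lemma exists_mul_rpow_neg_le (C : ℝ) {p q : ℝ} (hpq : p < q) :
    ∃ X₀ : ℝ, 1 ≤ X₀ ∧ ∀ X ≥ X₀, C * X ^ (-q) ≤ X ^ (-p) := by
  obtain ⟨B, hB⟩ := Filter.eventually_atTop.1
    ((tendsto_rpow_atTop (sub_pos.2 hpq)).eventually_ge_atTop C)
  refine ⟨max B 1, le_max_right _ _, fun X hX => ?_⟩
  have hX0 : 0 < X := zero_lt_one.trans_le ((le_max_right _ _).trans hX)
  calc C * X ^ (-q) ≤ X ^ (q - p) * X ^ (-q) := by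
        gcongr
        exact hB X ((le_max_left _ _).trans hX)
    _ = X ^ (-p) := by rw [← Real.rpow_add hX0]; ring_nf

section

variable {a β β' G c : ℝ}

lemma sub_le_potential_single (ha : 0 < a) (hβ : 0 ≤ β) (hβ' : 0 ≤ β') (hG : 0 ≤ G) (hc : 0 ≤ c)
    (hsuper : avg d (radial a β) ≤ radial a β)
    (hupper : ∀ y, IsSupersolution ∅ (Pi.single y 1) fun v : Pt d => G * radial a β (v - y))
    (hlower : ∀ y v : Pt d, c * radial 1 β' (v - y) ≤ potential d ∅ (Pi.single y 1) v)
    {A : Finset (Pt d)} {v w : Pt d} {B M : ℝ} (hB : 0 < B) (hv : ∀ z ∈ A, B ≤ normSq (v - z))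
    (hw : ∀ z ∈ A, B ≤ normSq (w - z)) (hM : normSq (v - w) + 1 ≤ M) :
    c * M ^ (-β') - A.card * (G * B ^ (-β) * (B ^ (-β) / radial a β (0 : Pt d))) ≤
      potential d (↑A) (Pi.single w 1) v := by
  have hnear (z : Pt d) (hz : z ∈ (A : Set (Pt d))) :
      potential d ∅ (Pi.single w 1) z ≤ G * B ^ (-β) := by
    refine ((hupper w).potential_le z).trans (mul_le_mul_of_nonneg_left ?_ hG)
    refine radial_le_rpow hβ hB ?_
    rw [← neg_sub, normSq_neg]
    linarith [hw z hz]
  have hkill := (hupper w).potential_le_union_add (isBarrier_radialBarrier ha hsuper A)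
    (by positivity) hnear v
  rw [Set.empty_union, Pi.add_apply, Pi.smul_apply, smul_eq_mul] at hkill
  have hbarrier := radialBarrier_le ha.le hβ hB fun z hz => (hv z hz).trans
    (le_add_of_nonneg_right ha.le)
  have hfar : M ^ (-β') ≤ radial 1 β' (v - w) :=
    Real.rpow_le_rpow_of_nonpos (by linarith [normSq_nonneg (v - w)]) hM (neg_nonpos.2 hβ')
  have hG_barrier := mul_le_mul_of_nonneg_left hbarrier (by positivity : 0 ≤ G * B ^ (-β))
  have hc_far := mul_le_mul_of_nonneg_left hfar hc
  linarith [hlower w v]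

lemma sq_div_four_le_normSq_sub {w z o : Pt d} {L : ℝ} (hL : 0 ≤ L) (hw : L ≤ dist0 d w o)
    (hz : dist0 d z o ≤ L / 4) : L ^ 2 / 4 ≤ normSq (w - z) := by
  rw [← dist0_sq]
  nlinarith [dist0_triangle w z o]

lemma exists_le_potential_single_of_shell (ha : 0 < a) (hβ : 0 ≤ β) (hβ' : 0 ≤ β')
    (hββ' : β' < 2 * β) (hG : 0 ≤ G) (hc : 0 < c)
    (hsuper : avg d (radial a β) ≤ radial a β)
    (hupper : ∀ y, IsSupersolution ∅ (Pi.single y 1) fun v : Pt d => G * radial a β (v - y))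
    (hlower : ∀ y v : Pt d, c * radial 1 β' (v - y) ≤ potential d ∅ (Pi.single y 1) v) :
    ∃ L₀ m : ℝ, 0 < m ∧ 1 ≤ L₀ ∧ ∀ (A : Finset (Pt d)) (o v w : Pt d), ∀ L ≥ L₀, A.card < d →
      (∀ z ∈ A, dist0 d z o ≤ L / 4) → L ≤ dist0 d v o → dist0 d v o ≤ L + 1 →
      L ≤ dist0 d w o → dist0 d w o ≤ L + 1 →
      m * L ^ (-(2 * β')) ≤ potential d (↑A) (Pi.single w 1) v := by
  have hu := radial_pos ha β (0 : Pt d)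
  obtain ⟨X₀, hX₀, hbound⟩ := exists_mul_rpow_neg_le
    (d * (G * (4⁻¹ ^ (-β) * 4⁻¹ ^ (-β)) / radial a β (0 : Pt d)) / (c / 2 * 32 ^ (-β'))) hββ'
  refine ⟨X₀, c / 2 * 32 ^ (-β'), by positivity, hX₀,
    fun A o v w L hL hA hAo hv hv1 hw hw1 => ?_⟩
  have hL1 : 1 ≤ L := hX₀.trans hL
  have hL0 : 0 < L := by linarith
  have hvw : normSq (v - w) + 1 ≤ 32 * L ^ 2 := by
    rw [← dist0_sq]
    nlinarith [dist0_triangle v o w, dist0_comm o w, dist0_nonneg v w]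
  have hgreen := sub_le_potential_single ha hβ hβ' hG hc.le hsuper hupper hlower
    (by positivity : 0 < L ^ 2 / 4)
    (fun z hz => sq_div_four_le_normSq_sub hL0.le hv (hAo z hz))
    (fun z hz => sq_div_four_le_normSq_sub hL0.le hw (hAo z hz)) hvw
  have hsq (p : ℝ) : (L ^ 2) ^ p = L ^ (2 * p) := by
    rw [← Real.rpow_natCast_mul hL0.le, Nat.cast_ofNat]
  have hkilled : A.card * (G * (L ^ 2 / 4) ^ (-β) *
      ((L ^ 2 / 4) ^ (-β) / radial a β (0 : Pt d))) ≤ c / 2 * (32 * L ^ 2) ^ (-β') := by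
    have hX := hbound (L ^ 2) (hL.trans (by nlinarith))
    rw [div_mul_eq_mul_div, div_le_iff₀' (by positivity), mul_assoc _ _ ((L ^ 2) ^ (-β')),
      ← Real.mul_rpow (x := 32) (by norm_num) (by positivity)] at hX
    refine le_trans ?_ hX
    have hsplit : (L ^ 2) ^ (-(2 * β)) = (L ^ 2) ^ (-β) * (L ^ 2) ^ (-β) := by
      rw [← Real.rpow_add (by positivity)]; ring_nf
    rw [div_eq_mul_inv (L ^ 2), Real.mul_rpow (by positivity) (by norm_num), hsplit]
    have hcard : (A.card : ℝ) ≤ d := by exact_mod_cast hA.le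
    refine (mul_le_mul_of_nonneg_right hcard (by positivity)).trans_eq (by ring)
  rw [Real.mul_rpow (by norm_num) (by positivity), hsq] at hgreen hkilled
  rw [← mul_neg]
  linarith

lemma exists_le_potential_single (hd : 0 < d) (ha : 0 < a) (hβ : 0 < β) (hβ' : 0 ≤ β')
    (hββ' : β' < 2 * β) (hG : 0 ≤ G) (hc : 0 < c)
    (hsuper : avg d (radial a β) ≤ radial a β)
    (hupper : ∀ y, IsSupersolution ∅ (Pi.single y 1) fun v : Pt d => G * radial a β (v - y))
    (hlower : ∀ y v : Pt d, c * radial 1 β' (v - y) ≤ potential d ∅ (Pi.single y 1) v) :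
    ∃ m : ℝ, 0 < m ∧ ∀ (A : Finset (Pt d)) (x y : Pt d), ∀ D ≥ 1, A.card < d → x ∉ A → y ∉ A →
      (∀ z ∈ A, dist0 d z x ≤ D) → dist0 d y x ≤ D + 1 →
      m * D ^ (-(2 * β')) ≤ potential d (↑A) (Pi.single y 1) x := by
  obtain ⟨L₀, m, hm, hL₀, hshell⟩ :=
    exists_le_potential_single_of_shell ha hβ.le hβ' hββ' hG hc hsuper hupper hlower
  obtain ⟨K, hK⟩ := exists_nat_mul_rpow_le a (d / radial a β (0 : Pt d)) hβ one_half_pos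
  rw [div_mul_eq_mul_div, mul_div_assoc] at hK
  have hL_pos : 0 < max L₀ (K + 4) := by positivity
  refine ⟨m * max L₀ (K + 4) ^ (-(2 * β')) / 2 / (2 * d) ^ K / 2 / (2 * d) ^ K, by positivity,
    fun A x y D hD hA hxA hyA hAD hyD => ?_⟩
  have hD0 : 0 < D := by linarith
  set L := max L₀ (K + 4) * D with hL
  have hL₀L : L₀ ≤ L := by nlinarith [le_max_left L₀ (K + 4)]
  have hKL : (K + 4) * D ≤ L := by
    rw [hL]; gcongr; exact le_max_right _ _
  have hKD : (K : ℝ) ≤ K * D := le_mul_of_one_le_right (Nat.cast_nonneg _) hD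
  have hAL (z : Pt d) (hz : z ∈ A) : dist0 d z x ≤ L / 4 := by
    linarith [hAD z hz, (Nat.cast_nonneg K : (0 : ℝ) ≤ K)]
  have hgreen (z : Pt d) :
      IsSupersolution (↑A) (Pi.single z 1) fun v : Pt d => G * radial a β (v - z) :=
    (hupper z).anti (Set.empty_subset _)
  -- By symmetry both arguments can be moved out to the shell: first `y`, then `x`.
  have hy_shell (w : Pt d) (hw : L ≤ dist0 d w x) (hw1 : dist0 d w x ≤ L + 1) (hwA : w ∉ A) :
      m * L ^ (-(2 * β')) / 2 / (2 * d) ^ K ≤ potential d (↑A) (Pi.single y 1) w := by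
    rw [potential_single_symm (by simpa using hwA) (by simpa using hyA)]
    exact div_pow_le_potential_of_shell ha hβ.le hsuper hK hA (hgreen w) (by positivity)
      (fun v hv hv1 _ => hshell A x v w L hL₀L hA hAL hv hv1 hw hw1) (by linarith) hyA
  have hx : dist0 d x x + K < L := by
    rw [dist0_eq, sub_self, normSq_zero, Real.sqrt_zero]
    linarith
  have hgreen_x := div_pow_le_potential_of_shell ha hβ.le hsuper hK hA (hgreen y)
    (by positivity) hy_shell hx hxA
  rw [hL, Real.mul_rpow hL_pos.le hD0.le] at hgreen_x
  refine le_trans (le_of_eq ?_) hgreen_x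
  ring

end

/-! ### Adding far points to the killing set -/

lemma potential_single (W : Set (Pt d)) (y : Pt d) (c : ℝ) (x : Pt d) :
    potential d W (Pi.single y c) x = c * potential d W (Pi.single y 1) x := by
  have hsmul : (Pi.single y c : Pt d → ℝ) = c • Pi.single y 1 := by
    rw [← Pi.single_smul, smul_eq_mul, mul_one]
  simp only [potential, hsmul, map_smul, Pi.smul_apply, smul_eq_mul, tsum_mul_left]

lemma hitFrom_eq_mul (W : Set (Pt d)) (x y : Pt d) :
    hitFrom d W x y = entryProb d W y * potential d W (Pi.single y 1) x := by
  rw [hitFrom_eq_potential, potential_single]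

lemma IsBarrier.isSupersolution {O : Set (Pt d)} {h : Pt d → ℝ} (hh : IsBarrier O h) :
    IsSupersolution O (entryProb d O) h where
  source_nonneg := entryProb_nonneg O
  nonneg := hh.nonneg
  le := by
    rw [entryProb, killedAvg_eq, ← map_add]
    refine (avg_mono fun v => ?_).trans hh.avg_le
    by_cases hv : v ∈ O
    · simpa [hv] using hh.one_le v hv
    · simp [hv]

lemma isBarrier_one (W : Set (Pt d)) : IsBarrier W 1 :=
  ⟨zero_le_one, fun _ _ => le_rfl, avg_one_le⟩

lemma retProb_nonneg (W : Set (Pt d)) (x : Pt d) : 0 ≤ retProb d W x := by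
  rw [retProb_eq_potential]
  exact potential_nonneg W (entryProb_nonneg W) x

lemma hitFrom_nonneg (W : Set (Pt d)) (x y : Pt d) : 0 ≤ hitFrom d W x y := by
  rw [hitFrom_eq_potential]
  exact potential_nonneg W (Pi.single_nonneg.2 (entryProb_nonneg W y)) x

lemma transP_nonneg (W : Set (Pt d)) (x y : Pt d) : 0 ≤ transP d W x y :=
  div_nonneg (hitFrom_nonneg W x y) (retProb_nonneg W x)

lemma hitFrom_le_retProb (W : Set (Pt d)) (x y : Pt d) : hitFrom d W x y ≤ retProb d W x := by
  classical
  rw [hitFrom_eq_potential, retProb_eq_potential]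
  refine (isBarrier_one W).isSupersolution.potential_mono_source
    (Pi.single_nonneg.2 (entryProb_nonneg W y)) (fun v => ?_) x
  rw [Pi.single_apply]
  split_ifs with hv
  · rw [hv]
  · exact entryProb_nonneg W v

lemma retProb_union_le {A O : Set (Pt d)} {h : Pt d → ℝ} (hh : IsBarrier O h) (x : Pt d) :
    retProb d (A ∪ O) x ≤ retProb d A x + h x := by
  have hA := ((isBarrier_one A).isSupersolution.potential_isSupersolution).anti
    (Set.subset_union_left (t := O))
  have hO := hh.isSupersolution.anti (Set.subset_union_right (s := A))
  have hsum : IsSupersolution (A ∪ O) (entryProb d (A ∪ O))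
      (potential d A (entryProb d A) + h) := by
    refine ⟨entryProb_nonneg _, add_nonneg hA.nonneg hh.nonneg, ?_⟩
    have hentry : entryProb d (A ∪ O) ≤ entryProb d A + entryProb d O := by
      rw [entryProb, entryProb, entryProb, ← map_add]
      refine avg_mono fun v => ?_
      by_cases hvA : v ∈ A <;> by_cases hvO : v ∈ O <;> simp [hvA, hvO]
    calc _ ≤ entryProb d A + entryProb d O +
          killedAvg d (A ∪ O) (potential d A (entryProb d A) + h) := by gcongr
      _ = _ := by rw [map_add, add_add_add_comm]
      _ ≤ _ := add_le_add hA.le hO.le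
  rw [retProb_eq_potential, retProb_eq_potential]
  exact hsum.potential_le x

lemma one_sub_two_mul_mul_div_le {a a' r r' η : ℝ} (ha : 0 ≤ a) (hr : 0 ≤ r)
    (ha' : 0 ≤ a') (har' : a' ≤ r') (haa' : a - η * a ≤ a') (hrr' : r' ≤ r + η * r) :
    (1 - 2 * η) * (a / r) ≤ a' / r' := by
  have hr' : 0 ≤ r' := ha'.trans har'
  rcases le_or_gt (1 - 2 * η) 0 with hη2 | hη2
  · exact (mul_nonpos_of_nonpos_of_nonneg hη2 (by positivity)).trans (by positivity)
  rcases hr.eq_or_lt with rfl | hr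
  · simpa using div_nonneg ha' hr'
  rcases hr'.eq_or_lt with rfl | hr'
  · have ha0 : a = 0 := by nlinarith
    simp [ha0]
  rw [mul_div_assoc', div_le_div_iff₀ hr hr']
  calc (1 - 2 * η) * a * r' ≤ (1 - 2 * η) * a * (r + η * r) := by gcongr
    _ = (a - η * a - 2 * η ^ 2 * a) * r := by ring
    _ ≤ a' * r := by
      gcongr
      exact (sub_le_self _ (by positivity)).trans haa'

lemma one_sub_mul_transP_le {A O : Set (Pt d)} {φ h : Pt d → ℝ} {x y : Pt d} {M η : ℝ}
    (hφ : IsSupersolution A (Pi.single y 1) φ) (hh : IsBarrier O h) (hM : 0 ≤ M)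
    (hO : ∀ v ∈ O, potential d A (Pi.single y 1) v ≤ M)
    (hgreen : M * h x ≤ η * potential d A (Pi.single y 1) x) (hret : h x ≤ η * retProb d A x) :
    (1 - 2 * η) * transP d A x y ≤ transP d (A ∪ O) x y := by
  refine one_sub_two_mul_mul_div_le (hitFrom_nonneg A x y) (retProb_nonneg A x)
    (hitFrom_nonneg _ x y) (hitFrom_le_retProb _ x y) ?_
    ((retProb_union_le hh x).trans (add_le_add_right hret _))
  have hpot : potential d A (Pi.single y 1) x - η * potential d A (Pi.single y 1) x ≤
      potential d (A ∪ O) (Pi.single y 1) x := by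
    have := hφ.potential_le_union_add hh hM hO x
    rw [Pi.add_apply, Pi.smul_apply, smul_eq_mul] at this
    linarith
  rw [hitFrom_eq_mul, hitFrom_eq_mul]
  calc _ = entryProb d A y *
        (potential d A (Pi.single y 1) x - η * potential d A (Pi.single y 1) x) := by ring
    _ ≤ entryProb d A y * potential d (A ∪ O) (Pi.single y 1) x :=
        mul_le_mul_of_nonneg_left hpot (entryProb_nonneg A y)
    _ ≤ _ := mul_le_mul_of_nonneg_right (entryProb_mono Set.subset_union_left y)
        (potential_nonneg _ hφ.source_nonneg x)

lemma exists_rpow_neg_mul_rpow_le {k : ℕ} (hk : k ≠ 0) {ε δ : ℝ} (hε : 0 < ε) (hεk : 3 * ε ≤ k)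
    (hεδ : 3 * ε ≤ δ) : ∃ C : ℝ, ∀ b s ρ D : ℝ, 0 ≤ b → 1 ≤ s → s ≤ ρ → 0 ≤ D →
      D ≤ b * Real.log ρ → b ^ k * s ^ (δ - k) ≤ 1 →
      ρ ^ (-(k - ε)) * D ^ (k + ε) ≤ C * (b ^ k * s ^ (δ - k)) := by
  have hp : 0 < k + ε := by positivity
  set θ := ε / (k + ε)
  have hθ0 : 0 < θ := div_pos hε hp
  have hθp : θ * (k + ε) = ε := div_mul_cancel₀ ε hp.ne'
  refine ⟨(θ ^ (k + ε))⁻¹, fun b s ρ D hb hs hsρ hD hDb hsmall => ?_⟩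
  have hs0 : 0 < s := by linarith
  have hρ0 : 0 < ρ := by linarith
  have hbs : b ≤ s := by
    have hs_pow : 1 ≤ s ^ δ := Real.one_le_rpow hs (by linarith)
    rw [Real.rpow_sub hs0, Real.rpow_natCast, mul_div_assoc', div_le_one (by positivity)] at hsmall
    exact le_of_pow_le_pow_left₀ hk hs0.le
      ((le_mul_of_one_le_right (by positivity) hs_pow).trans hsmall)
  have hDθ : D ^ (k + ε) ≤ b ^ k * (ρ ^ ε * ρ ^ ε) * (θ ^ (k + ε))⁻¹ := by
    calc D ^ (k + ε) ≤ (b * (ρ ^ θ / θ)) ^ (k + ε) := by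
          gcongr
          exact hDb.trans (by gcongr; exact Real.log_le_rpow_div hρ0.le hθ0)
      _ = b ^ k * (b ^ ε * ρ ^ ε) * (θ ^ (k + ε))⁻¹ := by
          rw [Real.mul_rpow hb (by positivity), Real.div_rpow (by positivity) hθ0.le,
            ← Real.rpow_mul hρ0.le, hθp, Real.rpow_add_of_nonneg hb k.cast_nonneg hε.le,
            Real.rpow_natCast]
          ring
      _ ≤ _ := by gcongr; exact hbs.trans hsρ
  calc ρ ^ (-(k - ε)) * D ^ (k + ε)
      ≤ ρ ^ (-(k - ε)) * (b ^ k * (ρ ^ ε * ρ ^ ε) * (θ ^ (k + ε))⁻¹) := by gcongr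
    _ = (θ ^ (k + ε))⁻¹ * (b ^ k * ρ ^ (3 * ε - k)) := by
        rw [show 3 * ε - k = -(k - ε) + (ε + ε) by ring, Real.rpow_add hρ0, Real.rpow_add hρ0]
        ring
    _ ≤ (θ ^ (k + ε))⁻¹ * (b ^ k * s ^ (3 * ε - k)) := by
        gcongr ?_ * (?_ * ?_)
        exact Real.rpow_le_rpow_of_nonpos hs0 hsρ (by linarith)
    _ ≤ (θ ^ (k + ε))⁻¹ * (b ^ k * s ^ (δ - k)) := by gcongr

/-! ### Clusterings -/

lemma sub_mem_steps_of_latAdj {y w : Pt d} (h : latAdj d y w) : w - y ∈ steps d := by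
  have hsum : ∑ i, (y i - w i).natAbs = 1 := h
  obtain ⟨i, hi, hi0⟩ := Finset.exists_ne_zero_of_sum_ne_zero (hsum.trans_ne one_ne_zero)
  rw [← Finset.add_sum_erase _ _ hi] at hsum
  have hrest : ∑ j ∈ Finset.univ.erase i, (y j - w j).natAbs = 0 := by omega
  have hsingle : w - y = Pi.single i (w i - y i) := by
    funext j
    by_cases hj : j = i
    · rw [hj, Pi.single_eq_same, Pi.sub_apply]
    · have := Finset.sum_eq_zero_iff.1 hrest j (Finset.mem_erase.2 ⟨hj, Finset.mem_univ j⟩)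
      rw [Pi.single_eq_of_ne hj, Pi.sub_apply]
      omega
  rw [hsingle, mem_steps]
  refine ⟨i, ?_⟩
  rcases (by omega : w i - y i = 1 ∨ w i - y i = -1) with h | h <;> simp [h]

lemma inv_le_entryProb {A : Set (Pt d)} {y w : Pt d} (hw : w ∈ A) (h : latAdj d y w) :
    1 / (2 * d : ℝ) ≤ entryProb d A y := by
  have := div_le_avg (f := A.indicator 1) (fun _ => Set.indicator_nonneg (by simp) _)
    (sub_mem_steps_of_latAdj h) y
  rwa [add_sub_cancel, Set.indicator_of_mem hw] at this

lemma dist0_eq_one_of_latAdj {y w : Pt d} (h : latAdj d y w) : dist0 d y w = 1 := by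
  rw [dist0_comm, ← add_sub_cancel y w]
  exact dist0_add_step (sub_mem_steps_of_latAdj h) y

lemma one_le_dist0 {x y : Pt d} (h : x ≠ y) : 1 ≤ dist0 d x y := by
  obtain ⟨i, hi⟩ := Function.ne_iff.1 h
  have hsq : (1 : ℝ) ≤ ((x - y) i : ℝ) ^ 2 := by
    exact_mod_cast sq_pos_of_ne_zero (sub_ne_zero.2 hi)
  rw [dist0_eq]
  exact Real.one_le_sqrt.2 (hsq.trans (sq_le_normSq _ i))

lemma setDist_le {A B : Finset (Pt d)} {p q : Pt d} (hp : p ∈ A) (hq : q ∈ B) :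
    setDist d A B ≤ dist0 d p q := by
  refine csInf_le ⟨0, ?_⟩ ⟨p, hp, q, hq, rfl⟩
  rintro r ⟨x, -, y, -, rfl⟩
  exact dist0_nonneg x y

lemma dist0_le_diam0 {A : Finset (Pt d)} {p q : Pt d} (hp : p ∈ A) (hq : q ∈ A) :
    dist0 d p q ≤ diam0 d A := by
  refine le_csSup ?_ ⟨p, hp, q, hq, rfl⟩
  refine (((A ×ˢ A).image fun z => dist0 d z.1 z.2).finite_toSet.subset ?_).bddAbove
  rintro r ⟨x, hx, y, hy, rfl⟩
  exact Finset.mem_coe.2 (Finset.mem_image.2 ⟨(x, y), Finset.mem_product.2 ⟨hx, hy⟩, rfl⟩)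

lemma one_le_diam0_of_mem_bdry {A : Finset (Pt d)} {x y : Pt d} (hx : x ∈ A)
    (hy : y ∈ bdry d ((↑A : Set (Pt d)) \ {x})) : 1 ≤ diam0 d A := by
  obtain ⟨-, w, ⟨hw, hwx⟩, -⟩ := hy
  exact (one_le_dist0 hwx).trans (dist0_le_diam0 hw hx)

lemma mem_others {k : ℕ} {C : Fin k → Finset (Pt d)} {i : Fin k} {z : Pt d} :
    z ∈ others d C i ↔ ∃ j, j ≠ i ∧ z ∈ C j := by
  simp only [others, Finset.mem_biUnion, Finset.mem_univ, true_and]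
  refine exists_congr fun j => ?_
  split_ifs with hj <;> simp [hj]

lemma one_le_setDist_others {k : ℕ} (hk : 2 ≤ k) {C : Fin k → Finset (Pt d)}
    (hne : ∀ i, (C i).Nonempty) (hdisj : ∀ i j, i ≠ j → Disjoint (C i) (C j)) (i : Fin k) :
    1 ≤ setDist d (C i) (others d C i) := by
  have : Nontrivial (Fin k) := Fin.nontrivial_iff_two_le.2 hk
  obtain ⟨j, hj⟩ := exists_ne i
  obtain ⟨p, hp⟩ := hne i
  obtain ⟨q, hq⟩ := hne j
  refine le_csInf ⟨_, p, hp, q, mem_others.2 ⟨j, hj, hq⟩, rfl⟩ ?_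
  rintro r ⟨x, hx, y, hy, rfl⟩
  obtain ⟨l, hl, hyl⟩ := mem_others.1 hy
  exact one_le_dist0 (Finset.disjoint_left.1 (hdisj i l hl.symm) hx <| · ▸ hyl)

lemma one_le_sep {C : ClusteringS d} (hk : 2 ≤ C.1) (hne : ∀ i, (C.2 i).Nonempty)
    (hdisj : ∀ i j, i ≠ j → Disjoint (C.2 i) (C.2 j)) : 1 ≤ sep d C.2 :=
  have : Nonempty (Fin C.1) := ⟨⟨0, by omega⟩⟩
  le_ciInf fun i => one_le_setDist_others hk hne hdisj i

lemma sep_le_setDist {k : ℕ} (C : Fin k → Finset (Pt d)) (i : Fin k) :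
    sep d C ≤ setDist d (C i) (others d C i) :=
  ciInf_le (Set.finite_range _).bddBelow i

lemma coe_confOf_diff_singleton {C : ClusteringS d}
    (hdisj : ∀ i j, i ≠ j → Disjoint (C.2 i) (C.2 j)) {i : Fin C.1} {x : Pt d} (hx : x ∈ C.2 i) :
    (↑(confOf d C) : Set (Pt d)) \ {x} = ↑((C.2 i).erase x) ∪ ↑(others d C.2 i) := by
  have hconf : (confOf d C : Set (Pt d)) = ↑(C.2 i) ∪ ↑(others d C.2 i) := by
    ext z
    simp only [confOf, Finset.mem_coe, Finset.mem_biUnion, Finset.mem_univ, true_and,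
      Set.mem_union, mem_others]
    exact ⟨fun ⟨j, hj⟩ => or_iff_not_imp_left.2 fun hz => ⟨j, fun h => hz (h ▸ hj), hj⟩,
      fun h => h.elim (⟨i, ·⟩) fun ⟨j, _, hj⟩ => ⟨j, hj⟩⟩
  have hx_others : x ∉ (others d C.2 i : Set (Pt d)) := fun h => by
    obtain ⟨j, hj, hxj⟩ := mem_others.1 h
    exact Finset.disjoint_left.1 (hdisj i j hj.symm) hx hxj
  rw [hconf, Set.union_sdiff_distrib, Set.sdiff_singleton_eq_self hx_others, Finset.coe_erase]

lemma card_others_le (C : ClusteringS d) (i : Fin C.1) :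
    (others d C.2 i).card ≤ (confOf d C).card := by
  refine Finset.card_le_card fun z hz => ?_
  obtain ⟨j, -, hj⟩ := mem_others.1 hz
  exact Finset.mem_biUnion.2 ⟨j, Finset.mem_univ j, hj⟩

/-! ### Transport comparison -/

lemma one_sub_mul_transP_union_le {a β G : ℝ} (hd : 0 < d) (ha : 0 < a) (hβ : 0 ≤ β) (hG : 0 ≤ G)
    (hsuper : avg d (radial a β) ≤ radial a β) {A : Set (Pt d)} {O : Finset (Pt d)} {x y : Pt d}
    {g ρ : ℝ} (hupper : IsSupersolution ∅ (Pi.single y 1) fun v : Pt d => G * radial a β (v - y))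
    (hentry : 1 / (2 * d : ℝ) ≤ entryProb d A y) (hg : 0 < g)
    (hgreen : g ≤ potential d A (Pi.single y 1) x) (hρ : 0 < ρ) (hO : ∀ z ∈ O, ρ ≤ dist0 d x z) :
    (1 - 2 * ((G * radial a β (0 : Pt d) + 2 * d) / radial a β (0 : Pt d) *
      (O.card * ρ ^ (-(2 * β)) / g))) * transP d A x y ≤ transP d (A ∪ ↑O) x y := by
  have hu := radial_pos ha β (0 : Pt d)
  have hφ := hupper.anti (Set.empty_subset A)
  have hM (v : Pt d) : potential d A (Pi.single y 1) v ≤ G * radial a β (0 : Pt d) := by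
    exact (hφ.potential_le v).trans
      (mul_le_mul_of_nonneg_left (radial_le_radial_zero ha hβ _) hG)
  have hbarrier : radialBarrier a β O x ≤ O.card * (ρ ^ (-(2 * β)) / radial a β (0 : Pt d)) := by
    rw [← mul_neg, ← Nat.cast_ofNat (n := 2), Real.rpow_natCast_mul hρ.le]
    refine radialBarrier_le ha.le hβ (by positivity) fun z hz => ?_
    rw [← dist0_sq]
    exact (pow_le_pow_left₀ hρ.le (hO z hz) 2).trans (le_add_of_nonneg_right ha.le)
  have hret : 1 / (2 * d : ℝ) * g ≤ retProb d A x := by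
    refine le_trans ?_ (hitFrom_le_retProb A x y)
    rw [hitFrom_eq_mul]
    exact mul_le_mul hentry hgreen hg.le (entryProb_nonneg A y)
  set u := radial a β (0 : Pt d)
  have hη : 0 ≤ (G * u + 2 * d) / u * (O.card * ρ ^ (-(2 * β)) / g) := by positivity
  refine one_sub_mul_transP_le hφ (isBarrier_radialBarrier ha hsuper O) (by positivity)
    (fun v _ => hM v) ?_ ?_
  · calc _ ≤ (G * u + 2 * d) * (O.card * (ρ ^ (-(2 * β)) / u)) := by
          gcongr
          · exact (isBarrier_radialBarrier ha hsuper O).nonneg x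
          · exact le_add_of_nonneg_right (by positivity)
      _ = (G * u + 2 * d) / u * (O.card * ρ ^ (-(2 * β)) / g) * g := by field_simp
      _ ≤ _ := by gcongr
  · calc _ ≤ (G * u + 2 * d) / (2 * d) * (O.card * (ρ ^ (-(2 * β)) / u)) := by
          refine hbarrier.trans (le_mul_of_one_le_left (by positivity) ?_)
          exact (one_le_div (by positivity)).2 (le_add_of_nonneg_left (by positivity))
      _ = (G * u + 2 * d) / u * (O.card * ρ ^ (-(2 * β)) / g) * (1 / (2 * d) * g) := by
          field_simp
      _ ≤ _ := by gcongr

lemma exists_one_sub_mul_transP_le (hd : 3 ≤ d) {ε : ℝ} (hε : 0 < ε) (hεd : 3 * ε < d - 2) :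
    ∃ c : ℝ, 0 < c ∧ ∀ (A O : Finset (Pt d)) (x y : Pt d) (D ρ : ℝ), A.card < d → x ∉ A →
      y ∉ A → 1 ≤ D → 0 < ρ → (∀ z ∈ A, dist0 d z x ≤ D) → (∃ w ∈ A, latAdj d y w) →
      (∀ z ∈ O, ρ ≤ dist0 d x z) →
      (1 - c * O.card * (ρ ^ (-(d - 2 - ε)) * D ^ (d - 2 + ε))) * transP d (↑A) x y ≤
        transP d (↑A ∪ ↑O) x y := by
  have hd0 : 0 < d := by omega
  obtain ⟨β, hβ⟩ : ∃ β : ℝ, 2 * β = d - 2 - ε := ⟨_, mul_div_cancel₀ _ two_ne_zero⟩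
  obtain ⟨β', hβ'⟩ : ∃ β' : ℝ, 2 * β' = d - 2 + ε := ⟨_, mul_div_cancel₀ _ two_ne_zero⟩
  have hβ_pos : 0 < β := by linarith
  obtain ⟨a, ha, hsuper⟩ := exists_avg_radial_le hd0 hβ_pos (by linarith)
  replace ha : 0 < a := by linarith
  replace hsuper := hsuper a le_rfl
  obtain ⟨G, hG, hupper⟩ := exists_isSupersolution_single hd0 ha hβ_pos hsuper
  obtain ⟨c, hc, hlower⟩ :=
    exists_mul_radial_le_potential hd0 (β := β') (by linarith) (by linarith) hupper
  obtain ⟨m, hm, hkilled⟩ := exists_le_potential_single hd0 ha hβ_pos (by linarith)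
    (by linarith) hG.le hc hsuper hupper hlower
  have hu := radial_pos ha β (0 : Pt d)
  refine ⟨2 * ((G * radial a β (0 : Pt d) + 2 * d) / (radial a β (0 : Pt d) * m)),
    by positivity, fun A O x y D ρ hA hx hy hD hρ hAD ⟨w, hw, hyw⟩ hO => ?_⟩
  have hyx : dist0 d y x ≤ D + 1 := by
    linarith [dist0_triangle y w x, dist0_eq_one_of_latAdj hyw, hAD w hw]
  have hcmp := one_sub_mul_transP_union_le hd0 ha hβ_pos.le hG.le hsuper (hupper y)
    (inv_le_entryProb (Finset.mem_coe.2 hw) hyw) (by positivity)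
    (hkilled A x y D hD hA hx hy hAD hyx) hρ hO
  rw [hβ, hβ', Real.rpow_neg (by linarith : 0 ≤ D)] at hcmp
  refine hcmp.trans_eq' ?_
  field_simp

lemma exists_one_sub_mul_transP_confOf_le (hd : 3 ≤ d) {ε : ℝ} (hε : 0 < ε)
    (hεd : 3 * ε < d - 2) :
    ∃ c : ℝ, 0 < c ∧ ∀ (n : ℕ) (C : ClusteringS d), IsClusteringConf d n C → 2 ≤ C.1 →
      (∀ i, (C.2 i).card ≤ d) → ∀ (i : Fin C.1) (x y : Pt d), x ∈ C.2 i →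
      y ∈ bdry d ((↑(C.2 i) : Set (Pt d)) \ {x}) →
      (1 - c * n * (setDist d (C.2 i) (others d C.2 i) ^ (-(d - 2 - ε)) *
        diam0 d (C.2 i) ^ (d - 2 + ε))) * transP d ((↑(C.2 i) : Set (Pt d)) \ {x}) x y ≤
        transP d ((↑(confOf d C) : Set (Pt d)) \ {x}) x y := by
  obtain ⟨c, hc, hcmp⟩ := exists_one_sub_mul_transP_le hd hε hεd
  refine ⟨c, hc, fun n C ⟨hne, hdisj, hn⟩ hk hcard i x y hx hxy => ?_⟩
  have hρ := one_le_setDist_others hk hne hdisj i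
  have hD := one_le_diam0_of_mem_bdry hx hxy
  obtain ⟨hy, w, hw, hyw⟩ := hxy
  rw [coe_confOf_diff_singleton hdisj hx]
  rw [← Finset.coe_erase, Finset.mem_coe] at hy hw
  rw [← Finset.coe_erase]
  refine le_trans (mul_le_mul_of_nonneg_right ?_ (transP_nonneg _ x y)) <|
    hcmp ((C.2 i).erase x) (others d C.2 i) x y _ _
      ((Finset.card_erase_lt_of_mem hx).trans_le (hcard i)) (Finset.notMem_erase x _) hy hD
      (zero_lt_one.trans_le hρ) (fun z hz => dist0_le_diam0 (Finset.mem_of_mem_erase hz) hx)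
      ⟨w, hw, hyw⟩ fun z hz => setDist_le hx hz
  gcongr
  exact hn ▸ card_others_le C i

theorem transport_comparison_general (d : ℕ) (hd : 3 ≤ d) (δ : ℝ) (hδ : 0 < δ) :
    ∃ c : ℝ, 0 < c ∧
      ∀ (n : ℕ) (b : ℝ) (C : ClusteringS d), IsClusteringConf d n C → 2 ≤ C.1 →
        (∀ i, (C.2 i).card ≤ d) →
        (∀ j, diam0 d (C.2 j) ≤ b * Real.log (setDist d (C.2 j) (others d C.2 j))) →
        ∀ (i : Fin C.1) (x y : Pt d), x ∈ C.2 i → y ∈ bdry d ((↑(C.2 i) : Set (Pt d)) \ {x}) →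
          (1 - c * n * b ^ (d - 2) * sep d C.2 ^ (2 + δ - d)) *
              transP d ((↑(C.2 i) : Set (Pt d)) \ {x}) x y ≤
            transP d ((↑(confOf d C) : Set (Pt d)) \ {x}) x y := by
  obtain ⟨ε, hε, hεd, hεδ⟩ : ∃ ε : ℝ, 0 < ε ∧ 3 * ε < d - 2 ∧ 3 * ε ≤ δ := by
    have hd' : (3 : ℝ) ≤ d := by exact_mod_cast hd
    exact ⟨min δ 1 / 4, by positivity, by linarith [min_le_right δ 1],
      by linarith [min_le_left δ 1]⟩
  have hd2 : ((d - 2 : ℕ) : ℝ) = d - 2 := by rw [Nat.cast_sub (by omega), Nat.cast_ofNat]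
  obtain ⟨c₀, hc₀, hcmp⟩ := exists_one_sub_mul_transP_confOf_le hd hε hεd
  obtain ⟨C₁, herror⟩ := exists_rpow_neg_mul_rpow_le (k := d - 2) (by omega) hε
    (hd2 ▸ hεd.le) hεδ
  have hexp : δ - (d - 2) = 2 + δ - d := by ring
  simp only [hd2, hexp] at herror
  refine ⟨max 1 (c₀ * C₁), by positivity, fun n b C hC hk hcard hdiam i x y hx hy => ?_⟩
  have hs := one_le_sep hk hC.1 hC.2.1
  have hsρ := sep_le_setDist C.2 i
  have hD := one_le_diam0_of_mem_bdry hx hy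
  have hlog := Real.log_nonneg (hs.trans hsρ)
  have hb : 0 ≤ b := by
    by_contra! hb
    nlinarith [hdiam i]
  have hn : (1 : ℝ) ≤ n := by
    rw [← hC.2.2, Nat.one_le_cast, Finset.one_le_card]
    exact ⟨x, Finset.mem_biUnion.2 ⟨i, Finset.mem_univ i, hx⟩⟩
  rw [mul_assoc _ _ (sep d C.2 ^ _)]
  rcases le_or_gt (b ^ (d - 2) * sep d C.2 ^ (2 + δ - d)) 1 with hE | hE
  · refine le_trans (mul_le_mul_of_nonneg_right ?_ (transP_nonneg _ x y))
      (hcmp n C hC hk hcard i x y hx hy)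
    rw [sub_le_sub_iff_left]
    calc _ ≤ c₀ * n * (C₁ * (b ^ (d - 2) * sep d C.2 ^ (2 + δ - d))) :=
          mul_le_mul_of_nonneg_left
            (herror b _ _ _ hb hs hsρ (by linarith) (hdiam i) hE) (by positivity)
      _ = c₀ * C₁ * n * (b ^ (d - 2) * sep d C.2 ^ (2 + δ - d)) := by ring
      _ ≤ _ := by gcongr; exact le_max_right _ _
  · refine le_trans (mul_nonpos_of_nonpos_of_nonneg ?_ (transP_nonneg _ x y)) (transP_nonneg _ x y)
    exact sub_nonpos.2 (one_le_mul_of_one_le_of_one_le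
      (one_le_mul_of_one_le_of_one_le (le_max_left _ _) hn) hE.le)

/-- **Transport comparison.** For `d ≥ 5` there is `c = c(d) > 0` such that for any
clustering `C` of an `n`-element configuration in `ℤ^d` (with at least two clusters, each
with at most 3 elements, `sep(C)^{0.1} ≥ (log sep(C))^{d−2}`, and
`diam(C^j) ≤ b log dist(C^j, C^{≠j})` for all `j`), any `x ∈ C^i` and any
`y ∈ ∂(C^i∖{x})` with `p_{π(C)}(x,y) > 0`:
`P_x(S_{τ−1} = y ∣ τ < ∞) ≥ (1 − c n b^{d−2} sep(C)^{2.1−d}) P_x(S_{τ'−1} = y ∣ τ' < ∞)`. -/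
theorem transport_comparison (d : ℕ) (hd : 5 ≤ d) :
    ∃ c : ℝ, 0 < c ∧
      ∀ (n : ℕ) (b : ℝ), 1 < b →
        ∀ C : ClusteringS d, IsClusteringConf d n C → 2 ≤ C.1 →
          (∀ i, (C.2 i).card ≤ 3) →
          (Real.log (sep d C.2)) ^ (d - 2) ≤ sep d C.2 ^ ((0.1 : ℝ)) →
          (∀ j, diam0 d (C.2 j) ≤ b * Real.log (setDist d (C.2 j) (others d C.2 j))) →
          ∀ (i : Fin C.1) (x y : Pt d), x ∈ C.2 i →
            y ∈ bdry d ((↑(C.2 i) : Set (Pt d)) \ {x}) →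
            0 < pHAT d (confOf d C) x y →
              (1 - c * (n : ℝ) * b ^ (d - 2) * sep d C.2 ^ ((2.1 : ℝ) - (d : ℝ))) *
                  transP d ((↑(C.2 i) : Set (Pt d)) \ {x}) x y ≤
                transP d ((↑(confOf d C) : Set (Pt d)) \ {x}) x y := by
  obtain ⟨c, hc, hcmp⟩ := transport_comparison_general d (by omega) 0.1 (by norm_num)
  have hexp : (2 : ℝ) + 0.1 = 2.1 := by norm_num
  rw [hexp] at hcmp
  exact ⟨c, hc, fun n b _ C hC hk hcard _ hdiam i x y hx hy _ =>
    hcmp n b C hC hk (fun j => (hcard j).trans (by omega)) hdiam i x y hx hy⟩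

end HATFormal
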